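/- arXiv:quant-ph/0505084 — 4 statements merged into one kernel-verified Lean document; each statement's English description precedes it below -/
import Mathlib

section
/- Let (a_1,…,a_k) be a perfect measurement on the complex d×d matrices, let θ₀ be a density matrix, and let P be a probability measure on Ω = {1,…,k}^ℕ satisfying the cylinder condition for θ₀. Then at least one of the following alternatives holds: (i) for P-almost every ω, for every m ∈ ℕ, lim_{n→∞} tr(Θ_n(ω)^m) = 1 (the quantum trajectory purifies with probability 1); or (ii) there exist an orthogonal projection p among the complex d×d matrices with rank p ≥ 2 and nonnegative real numbers λ_1,…,λ_k such that p a_i* a_i p = λ_i p for all i = 1,…,k. -/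
open Matrix MeasureTheory Filter
open scoped ComplexOrder

/-- For a finite word `w = (i₁,…,iₙ)` (as a list `[i₁,…,iₙ]`), the matrix
`A_w := a_{iₙ} ⋯ a_{i₁}`. -/
noncomputable def wordMatrix {I : Type*} {d : ℕ} (a : I → Matrix (Fin d) (Fin d) ℂ)
    (w : List I) : Matrix (Fin d) (Fin d) ℂ :=
  (w.reverse.map a).prod

/-- The quantum trajectory `Θ_n(ω) = A_w θ₀ A_w* / tr(A_w θ₀ A_w*)` with
`w = (ω₁,…,ω_n)`, set to the fixed density matrix `σ` when the trace vanishes. -/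
noncomputable def traj {d k : ℕ} (a : Fin k → Matrix (Fin d) (Fin d) ℂ)
    (θ₀ σ : Matrix (Fin d) (Fin d) ℂ) (n : ℕ) (ω : ℕ → Fin k) :
    Matrix (Fin d) (Fin d) ℂ :=
  let A := wordMatrix a (List.ofFn fun j : Fin n => ω (j : ℕ))
  if (A * θ₀ * Aᴴ).trace ≠ 0 then ((A * θ₀ * Aᴴ).trace)⁻¹ • (A * θ₀ * Aᴴ) else σ

/-- `P` satisfies the cylinder condition for `θ₀`:
`P{ω : ω₁ = i₁,…,ω_n = i_n} = tr(A_w θ₀ A_w*)`. -/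
def CylinderCondition {d k : ℕ} (a : Fin k → Matrix (Fin d) (Fin d) ℂ)
    (θ₀ : Matrix (Fin d) (Fin d) ℂ) (P : Measure (ℕ → Fin k)) : Prop :=
  ∀ (n : ℕ) (w : Fin n → Fin k),
    P {ω | ∀ j : Fin n, ω (j : ℕ) = w j} =
      ENNReal.ofReal
        ((wordMatrix a (List.ofFn w) * θ₀ * (wordMatrix a (List.ofFn w))ᴴ).trace.re)


namespace Purif

variable {d k : ℕ}

/-- A matrix as a Euclidean vector. -/
noncomputable def fvec (M : Matrix (Fin d) (Fin d) ℂ) : EuclideanSpace ℂ (Fin d × Fin d) :=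
  WithLp.toLp 2 (fun q => M q.1 q.2)

/-- Frobenius norm. -/
noncomputable def fro (M : Matrix (Fin d) (Fin d) ℂ) : ℝ := ‖fvec M‖

lemma fvec_add (M N : Matrix (Fin d) (Fin d) ℂ) : fvec (M + N) = fvec M + fvec N := by
  ext q; simp [fvec]

lemma fvec_zero : fvec (0 : Matrix (Fin d) (Fin d) ℂ) = 0 := by
  ext q; simp [fvec]

lemma fvec_smul (c : ℂ) (M : Matrix (Fin d) (Fin d) ℂ) : fvec (c • M) = c • fvec M := by
  ext q; simp [fvec]

lemma fvec_sum {ι : Type*} (s : Finset ι) (M : ι → Matrix (Fin d) (Fin d) ℂ) :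
    fvec (∑ i ∈ s, M i) = ∑ i ∈ s, fvec (M i) := by
  classical
  induction s using Finset.induction_on with
  | empty => simp [fvec_zero]
  | insert i s hi ih => rw [Finset.sum_insert hi, Finset.sum_insert hi, fvec_add, ih]

lemma fvec_inj {M N : Matrix (Fin d) (Fin d) ℂ} (h : fvec M = fvec N) : M = N := by
  ext i j
  have := congrArg (fun v => v (i, j)) h
  simpa [fvec] using this

lemma fro_nonneg (M : Matrix (Fin d) (Fin d) ℂ) : 0 ≤ fro M := norm_nonneg _

lemma fro_sq (M : Matrix (Fin d) (Fin d) ℂ) : fro M ^ 2 = (M * Mᴴ).trace.re := by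
  rw [fro, EuclideanSpace.norm_sq_eq, Fintype.sum_prod_type]
  simp only [Matrix.trace, Matrix.diag_apply, Matrix.mul_apply, Complex.re_sum,
    Matrix.conjTranspose_apply, fvec]
  refine Finset.sum_congr rfl fun i _ => Finset.sum_congr rfl fun j _ => ?_
  rw [Complex.star_def, Complex.mul_conj, Complex.ofReal_re, Complex.normSq_eq_norm_sq]

lemma fro_continuous : Continuous (fro : Matrix (Fin d) (Fin d) ℂ → ℝ) := by
  unfold fro fvec
  refine continuous_norm.comp ?_
  refine (PiLp.continuous_toLp 2 _).comp ?_
  fun_prop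

lemma fro_smul (c : ℂ) (M : Matrix (Fin d) (Fin d) ℂ) : fro (c • M) = ‖c‖ * fro M := by
  rw [fro, fvec_smul, norm_smul, fro]

lemma norm_le_fro (M : Matrix (Fin d) (Fin d) ℂ) (i j : Fin d) : ‖M i j‖ ≤ fro M := by
  simpa [fvec, fro] using PiLp.norm_apply_le (fvec M) (i, j)

open scoped Matrix.Norms.Frobenius in
lemma fro_mul (M N : Matrix (Fin d) (Fin d) ℂ) : fro (M * N) ≤ fro M * fro N := by
  have h : ∀ M : Matrix (Fin d) (Fin d) ℂ, fro M = ‖M‖ := by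
    intro M
    rw [fro, EuclideanSpace.norm_eq, Matrix.frobenius_norm_def, Fintype.sum_prod_type,
      Real.sqrt_eq_rpow]
    simp [fvec]
  rw [h, h, h]
  exact Matrix.frobenius_norm_mul M N

/-- Square root together with pseudo-inverse. -/
lemma exists_sqrt {X : Matrix (Fin d) (Fin d) ℂ} (hX : X.PosSemidef) :
    ∃ B C : Matrix (Fin d) (Fin d) ℂ, Bᴴ = B ∧ B * B = X ∧ (B * C)ᴴ = B * C ∧
      C * B = B * C ∧ B * C * B = B := by
  have hsp := hX.1.spectral_theorem
  set U : Matrix (Fin d) (Fin d) ℂ := (hX.1.eigenvectorUnitary : Matrix (Fin d) (Fin d) ℂ) with hU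
  have hUU : Uᴴ * U = 1 := by
    have := Unitary.coe_star_mul_self hX.1.eigenvectorUnitary
    simpa [Matrix.star_eq_conjTranspose] using this
  rw [Unitary.conjStarAlgAut_apply] at hsp
  set s : Fin d → ℝ := fun i => Real.sqrt (hX.1.eigenvalues i) with hs
  set D : (Fin d → ℝ) → Matrix (Fin d) (Fin d) ℂ := fun v =>
    U * diagonal (fun i => (v i : ℂ)) * Uᴴ with hD
  have hmul : ∀ v w, D v * D w = D (fun i => v i * w i) := by
    intro v w
    calc D v * D w = U * diagonal (fun i => (v i : ℂ)) * (Uᴴ * U) *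
          diagonal (fun i => (w i : ℂ)) * Uᴴ := by simp only [hD, Matrix.mul_assoc]
      _ = _ := by
        rw [hUU, Matrix.mul_one, Matrix.mul_assoc U, Matrix.diagonal_mul_diagonal]
        simp [hD]
  have hherm : ∀ v, (D v)ᴴ = D v := by
    intro v
    simp only [hD, Matrix.conjTranspose_mul, Matrix.conjTranspose_conjTranspose,
      Matrix.diagonal_conjTranspose, Matrix.mul_assoc]
    congr 3
    ext i; simp
  refine ⟨D s, D (fun i => (s i)⁻¹), hherm _, ?_, ?_, ?_, ?_⟩
  · rw [hmul]
    conv_rhs => rw [hsp]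
    have : (fun i => s i * s i) = hX.1.eigenvalues := by
      ext i; exact Real.mul_self_sqrt (hX.eigenvalues_nonneg i)
    rw [this]
    rfl
  · rw [hmul, hherm]
  · rw [hmul, hmul]; congr 1; ext i; ring
  · rw [hmul, hmul]; congr 1; ext i
    by_cases h : s i = 0
    · simp [h]
    · field_simp

lemma fro_le_trace {X : Matrix (Fin d) (Fin d) ℂ} (hX : X.PosSemidef) : fro X ≤ X.trace.re := by
  obtain ⟨B, C, hB, hBB, -⟩ := exists_sqrt hX
  calc fro X = fro (B * B) := by rw [hBB]
    _ ≤ fro B * fro B := fro_mul B B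
    _ = fro B ^ 2 := by ring
    _ = X.trace.re := by rw [fro_sq, hB, hBB]

lemma fro_conj (a B : Matrix (Fin d) (Fin d) ℂ) (hB : Bᴴ = B) :
    fro (a * (B * B) * aᴴ) = fro (B * (aᴴ * a) * B) := by
  have : fro (a * (B * B) * aᴴ) ^ 2 = fro (B * (aᴴ * a) * B) ^ 2 := by
    rw [fro_sq, fro_sq]
    congr 1
    simp only [Matrix.conjTranspose_mul, Matrix.conjTranspose_conjTranspose, hB]
    have h1 : a * (B * B) * aᴴ * (a * (B * B * aᴴ)) = (a * B) * (B * aᴴ * (a * (B * B * aᴴ))) := by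
      simp only [Matrix.mul_assoc]
    rw [h1, Matrix.trace_mul_comm]
    simp only [Matrix.mul_assoc]
  exact (sq_eq_sq₀ (fro_nonneg _) (fro_nonneg _)).1 this

/-- The gap function. -/
noncomputable def gap (a : Fin k → Matrix (Fin d) (Fin d) ℂ) (X : Matrix (Fin d) (Fin d) ℂ) : ℝ :=
  ∑ i, fro (a i * X * (a i)ᴴ) - fro X

lemma gap_continuous (a : Fin k → Matrix (Fin d) (Fin d) ℂ) : Continuous (gap a) := by
  unfold gap
  refine (continuous_finsetSum _ fun i _ => fro_continuous.comp ?_).sub fro_continuous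
  fun_prop

lemma gap_smul (a : Fin k → Matrix (Fin d) (Fin d) ℂ) (c : ℂ) (X : Matrix (Fin d) (Fin d) ℂ) :
    gap a (c • X) = ‖c‖ * gap a X := by
  simp only [gap, Matrix.mul_smul, Matrix.smul_mul, fro_smul, mul_sub, Finset.mul_sum]

lemma sum_conj (a : Fin k → Matrix (Fin d) (Fin d) ℂ) (ha : ∑ i, (a i)ᴴ * a i = 1)
    (B : Matrix (Fin d) (Fin d) ℂ) : ∑ i, B * ((a i)ᴴ * a i) * B = B * B := by
  rw [← Finset.sum_mul, ← Finset.mul_sum, ha, Matrix.mul_one]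

lemma gap_nonneg (a : Fin k → Matrix (Fin d) (Fin d) ℂ) (ha : ∑ i, (a i)ᴴ * a i = 1)
    {X : Matrix (Fin d) (Fin d) ℂ} (hX : X.PosSemidef) : 0 ≤ gap a X := by
  obtain ⟨B, C, hB, rfl, -⟩ := exists_sqrt hX
  rw [gap, sub_nonneg]
  simp_rw [fro_conj _ B hB]
  rw [← sum_conj a ha B, fro, fvec_sum]
  exact norm_sum_le _ _

lemma ray_of_norm_sum {E : Type*} [NormedAddCommGroup E] [InnerProductSpace ℝ E] {ι : Type*}
    [Fintype ι] [DecidableEq ι] (v : ι → E) (h0 : ∑ i, v i ≠ 0)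
    (h : ∑ i, ‖v i‖ ≤ ‖∑ i, v i‖) (i : ι) : ∃ r : ℝ, 0 ≤ r ∧ v i = r • ∑ j, v j := by
  have e1 : ∑ j, v j = v i + ∑ j ∈ Finset.univ.erase i, v j :=
    (Finset.add_sum_erase _ _ (Finset.mem_univ i)).symm
  have e2 : ∑ j, ‖v j‖ = ‖v i‖ + ∑ j ∈ Finset.univ.erase i, ‖v j‖ :=
    (Finset.add_sum_erase _ _ (Finset.mem_univ i)).symm
  have e3 := norm_sum_le (Finset.univ.erase i) v
  have hr : SameRay ℝ (v i) (∑ j ∈ Finset.univ.erase i, v j) := by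
    rw [sameRay_iff_norm_add]
    refine le_antisymm (norm_add_le _ _) ?_
    rw [← e1]; linarith
  have hr2 : SameRay ℝ (∑ j, v j) (v i) := by
    rw [e1]
    exact (SameRay.refl (v i)).add_left hr.symm
  obtain ⟨r, hr0, hr1⟩ := hr2.exists_nonneg_left h0
  exact ⟨r, hr0, hr1.symm⟩

lemma exists_proj (a : Fin k → Matrix (Fin d) (Fin d) ℂ) (ha : ∑ i, (a i)ᴴ * a i = 1)
    {X : Matrix (Fin d) (Fin d) ℂ} (hX : X.PosSemidef) (hr : 2 ≤ X.rank) (hg : gap a X = 0) :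
    ∃ p : Matrix (Fin d) (Fin d) ℂ, p.IsHermitian ∧ p * p = p ∧ 2 ≤ p.rank ∧
        ∀ i : Fin k, ∃ l : ℝ, 0 ≤ l ∧ p * (a i)ᴴ * a i * p = (l : ℂ) • p := by
  obtain ⟨B, C, hB, hBX, h1, h2, h3⟩ := exists_sqrt hX
  have hpp : B * C * (B * C) = B * C := by rw [← Matrix.mul_assoc, h3]
  refine ⟨B * C, h1, hpp, ?_, fun i => ?_⟩
  · refine hr.trans ?_
    calc X.rank = (B * C * X).rank := by rw [← hBX, ← Matrix.mul_assoc, h3]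
      _ ≤ (B * C).rank := Matrix.rank_mul_le_left _ _
  · have hX0 : X ≠ 0 := by
      rintro rfl; simp at hr
    have hsum : ∑ i, fvec (B * ((a i)ᴴ * a i) * B) = fvec X := by
      rw [← fvec_sum, sum_conj a ha, hBX]
    obtain ⟨r, hr0, hr1⟩ := ray_of_norm_sum (fun i => fvec (B * ((a i)ᴴ * a i) * B))
      (by
        rw [hsum]
        intro h
        exact hX0 (fvec_inj (h.trans fvec_zero.symm)))
      (by
        rw [hsum]
        have : ∑ i, fro (a i * X * (a i)ᴴ) - fro X = 0 := hg
        rw [← hBX] at this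
        simp_rw [fro_conj _ B hB] at this
        rw [← hBX]
        exact (sub_eq_zero.1 this).le) i
    refine ⟨r, hr0, ?_⟩
    have h4 : B * ((a i)ᴴ * a i) * B = (r : ℂ) • (B * B) := by
      apply fvec_inj
      rw [fvec_smul, hBX]
      simp only [hsum] at hr1
      rw [hr1]
      ext q; simp
    calc B * C * (a i)ᴴ * a i * (B * C) = C * (B * ((a i)ᴴ * a i) * B) * C := by
          rw [← h2]; simp only [Matrix.mul_assoc]
          rw [h2]
      _ = (r : ℂ) • (B * C) := by
          rw [h4, Matrix.mul_smul, Matrix.smul_mul, ← Matrix.mul_assoc, h2, h3]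

lemma pow_trace_of_rank {X : Matrix (Fin d) (Fin d) ℂ} (ht : X.trace = 1) (hr : ¬ 2 ≤ X.rank)
    (m : ℕ) (hm : 1 ≤ m) : (X ^ m).trace = 1 := by
  have h1 : Module.finrank ℂ (LinearMap.range X.mulVecLin) ≤ 1 := by
    have : X.rank ≤ 1 := by omega
    exact this
  obtain ⟨v, hv⟩ := finrank_le_one_iff.1 h1
  have hcol : ∀ j, ∃ c : ℂ, ∀ i, X i j = c * (v : Fin d → ℂ) i := by
    intro j
    obtain ⟨c, hc⟩ := hv ⟨X.mulVecLin (Pi.single j 1), LinearMap.mem_range_self _ _⟩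
    refine ⟨c, fun i => ?_⟩
    have := congrFun (congrArg Subtype.val hc) i
    simpa using this.symm
  choose c hc using hcol
  have ht' : ∑ l, c l * (v : Fin d → ℂ) l = 1 := by
    rw [← ht]; simp [Matrix.trace, hc]
  have hsq : X * X = X := by
    ext i j
    rw [Matrix.mul_apply]
    calc ∑ l, X i l * X l j = ∑ l, (c l * (v : Fin d → ℂ) l) * X i j :=
          Finset.sum_congr rfl fun l _ => by rw [hc l i, hc j l, hc j i]; ring
      _ = X i j := by rw [← Finset.sum_mul, ht', one_mul]
  have : IsIdempotentElem X := hsq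
  obtain ⟨n, rfl⟩ : ∃ n, m = n + 1 := ⟨m - 1, by omega⟩
  rw [this.pow_succ_eq, ht]

/-- Density matrices. -/
def dens (d : ℕ) : Set (Matrix (Fin d) (Fin d) ℂ) := {X | X.PosSemidef ∧ X.trace = 1}

lemma dens_compact : IsCompact (dens d) := by
  have hc : IsCompact (Set.univ.pi fun _ : Fin d => Set.univ.pi fun _ : Fin d =>
      Metric.closedBall (0 : ℂ) 1) :=
    isCompact_univ_pi fun _ => isCompact_univ_pi fun _ => isCompact_closedBall _ _
  refine IsCompact.of_isClosed_subset (X := Fin d → Fin d → ℂ) hc ?_ ?_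
  · have : dens d = {X | Xᴴ = X} ∩ (⋂ x : Fin d → ℂ, {X | 0 ≤ star x ⬝ᵥ (X *ᵥ x)}) ∩
        {X | X.trace = 1} := by
      ext X
      simp [dens, Matrix.posSemidef_iff_dotProduct_mulVec, Matrix.IsHermitian]
    change IsClosed (X := Matrix (Fin d) (Fin d) ℂ) (dens d)
    rw [this]
    refine ((isClosed_eq (by fun_prop) (by fun_prop)).inter (isClosed_iInter fun x => ?_)).inter
      (isClosed_eq (by fun_prop) (by fun_prop))
    exact isClosed_le (by fun_prop) (by fun_prop)
  · intro X hX i _ j _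
    have hX : Matrix.PosSemidef X ∧ Matrix.trace X = 1 := hX
    rw [mem_closedBall_zero_iff]
    refine (norm_le_fro X i j).trans ((fro_le_trace hX.1).trans ?_)
    rw [hX.2]; simp

lemma tendsto_of_gap {T : Type*} [TopologicalSpace T] {K : Set T} (hK : IsCompact K)
    {g : T → ℝ} (hg : Continuous g) {φ : T → ℂ} (hφ : Continuous φ)
    (h : ∀ y ∈ K, g y = 0 → φ y = 1) (x : ℕ → T) (hx : ∀ n, x n ∈ K)
    (hl : Tendsto (fun n => g (x n)) atTop (nhds 0)) :
    Tendsto (fun n => φ (x n)) atTop (nhds 1) := by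
  rw [tendsto_iff_ultrafilter]
  intro U hU
  obtain ⟨y, hy, hy2⟩ := hK.ultrafilter_le_nhds (U.map x) (by
    rw [le_principal_iff]
    exact Filter.mem_map.2 (Filter.univ_mem' hx))
  have ht : Tendsto x U (nhds y) := hy2
  have h0 : g y = 0 := tendsto_nhds_unique ((hg.tendsto y).comp ht) (hl.mono_left hU)
  have := (hφ.tendsto y).comp ht
  rw [h y hy h0] at this
  exact this

/-- Unnormalised state after the word `w`. -/
noncomputable def Xw (a : Fin k → Matrix (Fin d) (Fin d) ℂ) (θ : Matrix (Fin d) (Fin d) ℂ)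
    {n : ℕ} (w : Fin n → Fin k) : Matrix (Fin d) (Fin d) ℂ :=
  wordMatrix a (List.ofFn w) * θ * (wordMatrix a (List.ofFn w))ᴴ

/-- Normalised state after the word `w`. -/
noncomputable def Tw (a : Fin k → Matrix (Fin d) (Fin d) ℂ) (θ σ : Matrix (Fin d) (Fin d) ℂ)
    {n : ℕ} (w : Fin n → Fin k) : Matrix (Fin d) (Fin d) ℂ :=
  if (Xw a θ w).trace ≠ 0 then ((Xw a θ w).trace)⁻¹ • Xw a θ w else σ

lemma traj_eq (a : Fin k → Matrix (Fin d) (Fin d) ℂ) (θ σ : Matrix (Fin d) (Fin d) ℂ)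
    (n : ℕ) (ω : ℕ → Fin k) : traj a θ σ n ω = Tw a θ σ (fun j : Fin n => ω j) := rfl

lemma Xw_psd (a : Fin k → Matrix (Fin d) (Fin d) ℂ) {θ : Matrix (Fin d) (Fin d) ℂ}
    (hθ : θ.PosSemidef) {n : ℕ} (w : Fin n → Fin k) : (Xw a θ w).PosSemidef :=
  hθ.mul_mul_conjTranspose_same _

lemma Tw_dens (a : Fin k → Matrix (Fin d) (Fin d) ℂ) {θ σ : Matrix (Fin d) (Fin d) ℂ}
    (hθ : θ.PosSemidef) (hσ : σ ∈ dens d) {n : ℕ} (w : Fin n → Fin k) : Tw a θ σ w ∈ dens d := by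
  unfold Tw
  split_ifs with h
  · have hp := Xw_psd a hθ w
    refine ⟨hp.smul (inv_nonneg.2 hp.trace_nonneg), ?_⟩
    rw [Matrix.trace_smul, smul_eq_mul, inv_mul_cancel₀ h]
  · exact hσ

lemma Xw_snoc (a : Fin k → Matrix (Fin d) (Fin d) ℂ) (θ : Matrix (Fin d) (Fin d) ℂ)
    {n : ℕ} (w : Fin n → Fin k) (i : Fin k) :
    Xw a θ (Fin.snoc (α := fun _ => Fin k) w i : Fin (n + 1) → Fin k) =
      a i * Xw a θ w * (a i)ᴴ := by
  have : wordMatrix a (List.ofFn (Fin.snoc (α := fun _ => Fin k) w i : Fin (n + 1) → Fin k)) =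
      a i * wordMatrix a (List.ofFn w) := by
    rw [List.ofFn_succ']
    simp [wordMatrix]
  rw [Xw, this, Xw, Matrix.conjTranspose_mul]
  simp only [Matrix.mul_assoc]

lemma sum_snoc {n : ℕ} (f : (Fin (n + 1) → Fin k) → ℝ) :
    ∑ w, f w = ∑ w : Fin n → Fin k, ∑ i, f (Fin.snoc (α := fun _ => Fin k) w i) := by
  rw [Finset.sum_comm, ← Fintype.sum_prod_type']
  exact (Fintype.sum_equiv (Fin.snocEquiv (fun _ : Fin (n + 1) => Fin k)) _ _ fun x => rfl).symm

/-- Total Frobenius mass. -/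
noncomputable def S (a : Fin k → Matrix (Fin d) (Fin d) ℂ) (θ : Matrix (Fin d) (Fin d) ℂ)
    (n : ℕ) : ℝ := ∑ w : Fin n → Fin k, fro (Xw a θ w)

lemma sum_gap (a : Fin k → Matrix (Fin d) (Fin d) ℂ) (θ : Matrix (Fin d) (Fin d) ℂ)
    (n : ℕ) : ∑ w : Fin n → Fin k, gap a (Xw a θ w) = S a θ (n + 1) - S a θ n := by
  rw [S, sum_snoc, S, ← Finset.sum_sub_distrib]
  simp only [Xw_snoc, gap]

lemma lintegral_word (a : Fin k → Matrix (Fin d) (Fin d) ℂ) {θ : Matrix (Fin d) (Fin d) ℂ}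
    {P : Measure (ℕ → Fin k)} (hP : CylinderCondition a θ P) {n : ℕ}
    (h : (Fin n → Fin k) → ENNReal) :
    ∫⁻ ω, h (fun j : Fin n => ω j) ∂P = ∑ w, h w * ENNReal.ofReal ((Xw a θ w).trace.re) := by
  have hm : Measurable (fun (ω : ℕ → Fin k) (j : Fin n) => ω j) := by fun_prop
  rw [← lintegral_map (f := h) (measurable_of_finite h) hm, lintegral_fintype]
  refine Finset.sum_congr rfl fun w _ => ?_
  rw [Measure.map_apply hm (measurableSet_singleton w), Xw, ← hP n w]
  congr 2
  ext ω
  simp [funext_iff]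

lemma sum_trace (a : Fin k → Matrix (Fin d) (Fin d) ℂ) {θ : Matrix (Fin d) (Fin d) ℂ}
    (hθ : θ.PosSemidef) {P : Measure (ℕ → Fin k)} [IsProbabilityMeasure P]
    (hP : CylinderCondition a θ P) (n : ℕ) : S a θ n ≤ 1 := by
  have h := lintegral_word a hP (n := n) (fun _ => 1)
  simp only [lintegral_const, measure_univ, one_mul] at h
  rw [← ENNReal.ofReal_sum_of_nonneg
    (fun w _ => (fro_nonneg _).trans (fro_le_trace (Xw_psd a hθ w)))] at h
  have h1 : ∑ w : Fin n → Fin k, (Xw a θ w).trace.re = 1 := by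
    simpa using h.symm
  rw [← h1]
  exact Finset.sum_le_sum fun w _ => fro_le_trace (Xw_psd a hθ w)

lemma lintegral_gap (a : Fin k → Matrix (Fin d) (Fin d) ℂ) (ha : ∑ i, (a i)ᴴ * a i = 1)
    {θ σ : Matrix (Fin d) (Fin d) ℂ}
    (hθ : θ.PosSemidef) (hσ : σ ∈ dens d) {P : Measure (ℕ → Fin k)}
    (hP : CylinderCondition a θ P) (n : ℕ) :
    ∫⁻ ω, ENNReal.ofReal (gap a (traj a θ σ n ω)) ∂P ≤
      ENNReal.ofReal (S a θ (n + 1) - S a θ n) := by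
  simp only [traj_eq]
  rw [lintegral_word a hP (fun w => ENNReal.ofReal (gap a (Tw a θ σ w))), ← sum_gap,
    ENNReal.ofReal_sum_of_nonneg (fun w _ => gap_nonneg a ha (Xw_psd a hθ w))]
  refine Finset.sum_le_sum fun w _ => ?_
  rw [← ENNReal.ofReal_mul (gap_nonneg a ha (Tw_dens a hθ hσ w).1)]
  refine ENNReal.ofReal_le_ofReal ?_
  have hp := Xw_psd a hθ w
  by_cases h : (Xw a θ w).trace = 0
  · rw [h]; simpa using gap_nonneg a ha hp
  · have hre : (Xw a θ w).trace.re = ‖(Xw a θ w).trace‖ :=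
      (Complex.re_eq_norm.2 hp.trace_nonneg)
    rw [Tw, if_pos h, gap_smul, hre, norm_inv]
    have : ‖(Xw a θ w).trace‖ ≠ 0 := norm_ne_zero_iff.2 h
    apply le_of_eq
    field_simp

lemma gap_tendsto (a : Fin k → Matrix (Fin d) (Fin d) ℂ) (ha : ∑ i, (a i)ᴴ * a i = 1)
    {θ σ : Matrix (Fin d) (Fin d) ℂ}
    (hθ : θ.PosSemidef) (hσ : σ ∈ dens d) {P : Measure (ℕ → Fin k)} [IsProbabilityMeasure P]
    (hP : CylinderCondition a θ P) :
    ∀ᵐ ω ∂P, Tendsto (fun n => gap a (traj a θ σ n ω)) atTop (nhds 0) := by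
  have hmono : ∀ n, 0 ≤ S a θ (n + 1) - S a θ n := fun n => by
    rw [← sum_gap]
    exact Finset.sum_nonneg fun w _ => gap_nonneg a ha (Xw_psd a hθ w)
  have hmeas : ∀ n, Measurable fun ω => ENNReal.ofReal (gap a (traj a θ σ n ω)) := by
    intro n
    simp only [traj_eq]
    have hm : Measurable (fun (ω : ℕ → Fin k) (j : Fin n) => ω j) := by fun_prop
    exact (measurable_of_finite
      (fun w : Fin n → Fin k => ENNReal.ofReal (gap a (Tw a θ σ w)))).comp hm
  have hle : ∫⁻ ω, ∑' n, ENNReal.ofReal (gap a (traj a θ σ n ω)) ∂P ≤ 1 := by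
    rw [lintegral_tsum fun n => (hmeas n).aemeasurable]
    refine (ENNReal.tsum_le_tsum fun n => lintegral_gap a ha hθ hσ hP n).trans ?_
    refine ENNReal.tsum_le_of_sum_range_le fun N => ?_
    rw [← ENNReal.ofReal_sum_of_nonneg fun n _ => hmono n, Finset.sum_range_sub,
      ← ENNReal.ofReal_one]
    refine ENNReal.ofReal_le_ofReal ?_
    have h0 : 0 ≤ S a θ 0 := Finset.sum_nonneg fun w _ => fro_nonneg _
    linarith [sum_trace a hθ hP N]
  have hae := ae_lt_top (Measurable.tsum hmeas) (hle.trans_lt ENNReal.one_lt_top).ne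
  filter_upwards [hae] with ω hω
  have ht := ENNReal.tendsto_atTop_zero_of_tsum_ne_top hω.ne
  have ht2 := (ENNReal.tendsto_toReal ENNReal.zero_ne_top).comp ht
  simp only [ENNReal.toReal_zero] at ht2
  refine ht2.congr fun n => ?_
  exact ENNReal.toReal_ofReal (gap_nonneg a ha (by rw [traj_eq]; exact (Tw_dens a hθ hσ _).1))

end Purif

/-- Theorem (main): for repeated perfect measurement, either the quantum trajectory
purifies with probability 1, or there is a projection `p` of rank at least two on
which every `a_i* a_i` compresses to a scalar. -/
theorem purification_main {d k : ℕ}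
    (a : Fin k → Matrix (Fin d) (Fin d) ℂ)
    (ha : ∑ i, (a i)ᴴ * a i = 1)
    (θ₀ : Matrix (Fin d) (Fin d) ℂ)
    (hθ₀ : θ₀.PosSemidef ∧ θ₀.trace = 1)
    (σ : Matrix (Fin d) (Fin d) ℂ)
    (hσ : σ.PosSemidef ∧ σ.trace = 1)
    (P : Measure (ℕ → Fin k)) [IsProbabilityMeasure P]
    (hP : CylinderCondition a θ₀ P) :
    (∀ᵐ ω ∂P, ∀ m : ℕ, 1 ≤ m →
        Tendsto (fun n : ℕ => ((traj a θ₀ σ n ω) ^ m).trace) atTop (nhds 1)) ∨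
    (∃ p : Matrix (Fin d) (Fin d) ℂ, p.IsHermitian ∧ p * p = p ∧ 2 ≤ p.rank ∧
        ∀ i : Fin k, ∃ l : ℝ, 0 ≤ l ∧ p * (a i)ᴴ * a i * p = (l : ℂ) • p) := by
  by_cases hii : ∃ p : Matrix (Fin d) (Fin d) ℂ, p.IsHermitian ∧ p * p = p ∧ 2 ≤ p.rank ∧
        ∀ i : Fin k, ∃ l : ℝ, 0 ≤ l ∧ p * (a i)ᴴ * a i * p = (l : ℂ) • p
  · exact Or.inr hii
  · left
    filter_upwards [Purif.gap_tendsto a ha hθ₀.1 hσ hP] with ω hω m hm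
    refine Purif.tendsto_of_gap Purif.dens_compact (Purif.gap_continuous a)
      (φ := fun X => (X ^ m).trace) (by fun_prop) ?_ (fun n => traj a θ₀ σ n ω)
      (fun n => by rw [Purif.traj_eq]; exact Purif.Tw_dens a hθ₀.1 hσ _) hω
    intro y hy hg
    refine Purif.pow_trace_of_rank hy.2 (fun hr => hii ?_) m hm
    exact Purif.exists_proj a ha hy.1 hr hg
end

section
/- Let (a_1,…,a_k) be a perfect measurement on the complex d×d matrices, let θ₀ be a density matrix, and let P be a probability measure on Ω = {1,…,k}^ℕ satisfying the cylinder condition for θ₀. Then either (i) for P-almost every ω, for every m ∈ ℕ, lim_{n→∞} tr(Θ_n(ω)^m) = 1; or (ii) there exists an orthogonal projection p among the complex d×d matrices with rank p ≥ 2 such that for every l ∈ ℕ and every word w = (i_1,…,i_l) with letters in {1,…,k} there exists λ_w ≥ 0 with p A_w* A_w p = λ_w p (p is a dark projection). -/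
open Matrix MeasureTheory Filter
open scoped ComplexOrder

namespace QPur

/-- The vectorisation of a matrix, with the Euclidean norm. -/
noncomputable def V {d : ℕ} (X : Matrix (Fin d) (Fin d) ℂ) : EuclideanSpace ℂ (Fin d × Fin d) :=
  WithLp.toLp 2 (fun p => X p.1 p.2)

/-- The Frobenius norm. -/
noncomputable def N {d : ℕ} (X : Matrix (Fin d) (Fin d) ℂ) : ℝ := ‖V X‖

variable {d : ℕ}

lemma V_add (X Y : Matrix (Fin d) (Fin d) ℂ) : V (X + Y) = V X + V Y := by
  ext p; simp [V]

lemma V_smul (c : ℝ) (X : Matrix (Fin d) (Fin d) ℂ) : V ((c : ℂ) • X) = c • V X := by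
  ext p; simp [V]

lemma V_zero : V (0 : Matrix (Fin d) (Fin d) ℂ) = 0 := by
  ext p; simp [V]

lemma V_inj {X Y : Matrix (Fin d) (Fin d) ℂ} (h : V X = V Y) : X = Y := by
  ext i j
  have := congrArg (fun f : EuclideanSpace ℂ (Fin d × Fin d) => f (i, j)) h
  simpa [V] using this

lemma V_sum {J : Type*} (s : Finset J) (f : J → Matrix (Fin d) (Fin d) ℂ) :
    V (∑ j ∈ s, f j) = ∑ j ∈ s, V (f j) := by
  classical
  induction s using Finset.induction_on with
  | empty => simp [V_zero]
  | insert j s hj ih => rw [Finset.sum_insert hj, Finset.sum_insert hj, V_add, ih]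

lemma N_nonneg (X : Matrix (Fin d) (Fin d) ℂ) : 0 ≤ N X := norm_nonneg _

lemma N_smul (c : ℝ) (hc : 0 ≤ c) (X : Matrix (Fin d) (Fin d) ℂ) : N ((c : ℂ) • X) = c * N X := by
  rw [N, V_smul, norm_smul, Real.norm_of_nonneg hc, N]

lemma N_sq (X : Matrix (Fin d) (Fin d) ℂ) : N X ^ 2 = (Xᴴ * X).trace.re := by
  rw [N, EuclideanSpace.norm_sq_eq, Fintype.sum_prod_type_right]
  simp only [V, Matrix.trace, Matrix.diag_apply, Matrix.mul_apply, Complex.re_sum,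
    Matrix.conjTranspose_apply]
  refine Finset.sum_congr rfl fun i _ => Finset.sum_congr rfl fun j _ => ?_
  rw [← Complex.normSq_eq_norm_sq, Complex.normSq_apply]
  simp

lemma N_flip (Y : Matrix (Fin d) (Fin d) ℂ) : N (Y * Yᴴ) = N (Yᴴ * Y) := by
  have h : N (Y * Yᴴ) ^ 2 = N (Yᴴ * Y) ^ 2 := by
    rw [N_sq, N_sq]
    simp only [conjTranspose_mul, conjTranspose_conjTranspose]
    rw [Matrix.mul_assoc, Matrix.trace_mul_comm]
    simp only [Matrix.mul_assoc]
  exact (pow_left_inj₀ (N_nonneg _) (N_nonneg _) two_ne_zero).1 h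

lemma spectral {X : Matrix (Fin d) (Fin d) ℂ} (hX : X.PosSemidef) :
    ∃ (U : Matrix (Fin d) (Fin d) ℂ) (v : Fin d → ℝ), Uᴴ * U = 1 ∧ U * Uᴴ = 1 ∧ (∀ i, 0 ≤ v i) ∧
      X = U * diagonal (fun i => (v i : ℂ)) * Uᴴ := by
  refine ⟨hX.1.eigenvectorUnitary, hX.1.eigenvalues, ?_, ?_, hX.eigenvalues_nonneg, ?_⟩
  · rw [← Matrix.star_eq_conjTranspose]; exact Unitary.coe_star_mul_self _
  · rw [← Matrix.star_eq_conjTranspose]; exact Unitary.coe_mul_star_self _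
  · conv_lhs => rw [hX.1.spectral_theorem, Unitary.conjStarAlgAut_apply]
    rfl

lemma conj_mul {U : Matrix (Fin d) (Fin d) ℂ} (hU : Uᴴ * U = 1) (x y : Fin d → ℂ) :
    (U * diagonal x * Uᴴ) * (U * diagonal y * Uᴴ) = U * diagonal (fun i => x i * y i) * Uᴴ := by
  rw [← Matrix.diagonal_mul_diagonal]
  calc _ = U * diagonal x * (Uᴴ * U) * diagonal y * Uᴴ := by simp only [Matrix.mul_assoc]
    _ = _ := by rw [hU]; simp only [Matrix.mul_assoc, Matrix.one_mul]

lemma conj_pow {U : Matrix (Fin d) (Fin d) ℂ} (hU : Uᴴ * U = 1) (hU' : U * Uᴴ = 1) (x : Fin d → ℂ)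
    (m : ℕ) : (U * diagonal x * Uᴴ) ^ m = U * diagonal (fun i => x i ^ m) * Uᴴ := by
  induction m with
  | zero => simp [hU']
  | succ m ih => rw [pow_succ, ih, conj_mul hU]; simp only [pow_succ]

lemma conj_trace {U : Matrix (Fin d) (Fin d) ℂ} (hU : Uᴴ * U = 1) (x : Fin d → ℂ) :
    (U * diagonal x * Uᴴ).trace = ∑ i, x i := by
  rw [Matrix.mul_assoc, Matrix.trace_mul_comm, Matrix.mul_assoc, hU, Matrix.mul_one,
    Matrix.trace_diagonal]

lemma conj_herm (U : Matrix (Fin d) (Fin d) ℂ) (v : Fin d → ℝ) :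
    (U * diagonal (fun i => (v i : ℂ)) * Uᴴ)ᴴ = U * diagonal (fun i => (v i : ℂ)) * Uᴴ := by
  simp only [conjTranspose_mul, conjTranspose_conjTranspose, Matrix.diagonal_conjTranspose,
    Matrix.mul_assoc]
  congr 3
  ext i; simp

lemma spectral' {X : Matrix (Fin d) (Fin d) ℂ} (hX : X.PosSemidef) :
    ∃ v : Fin d → ℝ, (∀ i, 0 ≤ v i) ∧ X.trace = ((∑ i, v i : ℝ) : ℂ) ∧ N X ^ 2 = ∑ i, v i ^ 2 ∧
      ∀ m, (X ^ m).trace = ((∑ i, v i ^ m : ℝ) : ℂ) := by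
  obtain ⟨U, v, h1, h2, h3, rfl⟩ := spectral hX
  refine ⟨v, h3, ?_, ?_, fun m => ?_⟩
  · rw [conj_trace h1]; push_cast; rfl
  · rw [N_sq, conj_herm, conj_mul h1, conj_trace h1]
    rw [Complex.re_sum]
    refine Finset.sum_congr rfl fun i _ => ?_
    rw [← Complex.ofReal_mul, Complex.ofReal_re, sq]
  · rw [conj_pow h1 h2, conj_trace h1]; push_cast; rfl

lemma sum_sq_le {v : Fin d → ℝ} (hv : ∀ i, 0 ≤ v i) : ∑ i, v i ^ 2 ≤ (∑ i, v i) ^ 2 :=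
  Finset.sum_sq_le_sq_sum_of_nonneg fun i _ => hv i

lemma trace_eq {X : Matrix (Fin d) (Fin d) ℂ} (hX : X.PosSemidef) :
    X.trace = (X.trace.re : ℂ) := by
  obtain ⟨v, h0, h1, -, -⟩ := spectral' hX
  rw [h1, Complex.ofReal_re]

lemma trace_nonneg {X : Matrix (Fin d) (Fin d) ℂ} (hX : X.PosSemidef) : 0 ≤ X.trace.re := by
  obtain ⟨v, h0, h1, -, -⟩ := spectral' hX
  rw [h1, Complex.ofReal_re]
  exact Finset.sum_nonneg fun i _ => h0 i

lemma N_le_trace {X : Matrix (Fin d) (Fin d) ℂ} (hX : X.PosSemidef) : N X ≤ X.trace.re := by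
  have h := trace_nonneg hX
  obtain ⟨v, h0, h1, h2, -⟩ := spectral' hX
  rw [h1, Complex.ofReal_re] at h ⊢
  refine (pow_le_pow_iff_left₀ (N_nonneg _) h two_ne_zero).1 ?_
  rw [h2]; exact sum_sq_le h0

lemma trace_pow_bound {X : Matrix (Fin d) (Fin d) ℂ} (hX : X.PosSemidef) (ht : X.trace = 1)
    (m : ℕ) : ‖(X ^ (m + 1)).trace - 1‖ ≤ m * (1 - N X ^ 2) := by
  obtain ⟨v, h0, h1, h2, h3⟩ := spectral' hX
  rw [h3, h2]
  have hs : ∑ i, v i = 1 := by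
    rw [h1] at ht; exact_mod_cast ht
  have hle : ∀ i, v i ≤ 1 := fun i => by
    rw [← hs]; exact Finset.single_le_sum (fun j _ => h0 j) (Finset.mem_univ i)
  rw [← Complex.ofReal_one, ← Complex.ofReal_sub, Complex.norm_real, Real.norm_eq_abs, abs_sub_comm,
    ← hs, ← Finset.sum_sub_distrib, ← Finset.sum_sub_distrib, Finset.mul_sum, abs_of_nonneg]
  · refine Finset.sum_le_sum fun i _ => ?_
    have hb := one_add_mul_le_pow (a := v i - 1) (by linarith [h0 i]) m
    have : v i ^ (m + 1) = v i * v i ^ m := by ring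
    rw [this]
    have hb' : 1 + (m : ℝ) * (v i - 1) ≤ v i ^ m := by simpa using hb
    nlinarith [mul_le_mul_of_nonneg_left hb' (h0 i)]
  · refine Finset.sum_nonneg fun i _ => ?_
    have : v i ^ (m + 1) ≤ v i := by
      have := pow_le_one₀ (h0 i) (hle i) (n := m)
      calc v i ^ (m + 1) = v i ^ m * v i := pow_succ _ _
        _ ≤ 1 * v i := mul_le_mul_of_nonneg_right this (h0 i)
        _ = v i := one_mul _
    linarith

lemma exists_fac {X : Matrix (Fin d) (Fin d) ℂ} (hX : X.PosSemidef) :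
    ∃ s : Matrix (Fin d) (Fin d) ℂ, sᴴ = s ∧ s * s = X := by
  obtain ⟨U, v, h1, h2, h3, rfl⟩ := spectral hX
  refine ⟨U * diagonal (fun i => ((√(v i) : ℝ) : ℂ)) * Uᴴ, conj_herm _ _, ?_⟩
  rw [conj_mul h1]
  congr 3
  ext i
  rw [← Complex.ofReal_mul, Real.mul_self_sqrt (h3 i)]

lemma exists_supp {X : Matrix (Fin d) (Fin d) ℂ} (hX : X.PosSemidef) (ht : X.trace = 1)
    (hN : N X < 1) :
    ∃ s r p : Matrix (Fin d) (Fin d) ℂ, sᴴ = s ∧ s * s = X ∧ r * s = p ∧ s * r = p ∧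
      p.IsHermitian ∧ p * p = p ∧ 2 ≤ p.rank := by
  obtain ⟨U, v, h1, h2, h3, rfl⟩ := spectral hX
  have hm : ∀ i, (((√(v i))⁻¹ : ℝ) : ℂ) * ((√(v i) : ℝ) : ℂ) = ((if v i = 0 then 0 else 1 : ℝ) : ℂ) := by
    intro i
    rw [← Complex.ofReal_mul]
    split_ifs with h
    · simp [h]
    · rw [inv_mul_cancel₀]
      exact (Real.sqrt_ne_zero (h3 i)).2 h
  refine ⟨U * diagonal (fun i => ((√(v i) : ℝ) : ℂ)) * Uᴴ,
    U * diagonal (fun i => (((√(v i))⁻¹ : ℝ) : ℂ)) * Uᴴ,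
    U * diagonal (fun i => ((if v i = 0 then 0 else 1 : ℝ) : ℂ)) * Uᴴ, conj_herm _ _,
    ?_, ?_, ?_, conj_herm _ _, ?_, ?_⟩
  · rw [conj_mul h1]
    congr 3
    ext i
    rw [← Complex.ofReal_mul, Real.mul_self_sqrt (h3 i)]
  · rw [conj_mul h1]; simp only [hm]
  · rw [conj_mul h1]
    congr 3
    ext i
    rw [mul_comm, hm]
  · rw [conj_mul h1]
    congr 3
    ext i
    split_ifs <;> simp
  · have hu : IsUnit U.det := (Matrix.isUnit_iff_isUnit_det U).1 (IsUnit.of_mul_eq_one _ h2)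
    have hu' : IsUnit Uᴴ.det := (Matrix.isUnit_iff_isUnit_det _).1 (IsUnit.of_mul_eq_one _ h1)
    rw [Matrix.rank_mul_eq_left_of_isUnit_det _ _ hu', Matrix.rank_mul_eq_right_of_isUnit_det _ _ hu]
    classical
    rw [Matrix.rank_diagonal]
    have hsum : ∑ i, v i = 1 := by
      rw [conj_trace h1] at ht; exact_mod_cast ht
    have hN2 : ∑ i, v i ^ 2 < 1 := by
      have : N (U * diagonal (fun i => (v i : ℂ)) * Uᴴ) ^ 2 = ∑ i, v i ^ 2 := by
        rw [N_sq, conj_herm, conj_mul h1, conj_trace h1, Complex.re_sum]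
        refine Finset.sum_congr rfl fun i _ => ?_
        rw [← Complex.ofReal_mul, Complex.ofReal_re, sq]
      rw [← this]
      exact pow_lt_one₀ (N_nonneg _) hN two_ne_zero
    obtain ⟨i, hi⟩ : ∃ i, v i ≠ 0 := by
      by_contra! h
      simp [h] at hsum
    obtain ⟨j, hj, hij⟩ : ∃ j, v j ≠ 0 ∧ j ≠ i := by
      by_contra! h
      have hz : ∀ j, j ≠ i → v j = 0 := fun j hj => by
        by_contra h'; exact hj (h j h')
      rw [Fintype.sum_eq_single i hz] at hsum
      rw [Fintype.sum_eq_single i (fun j hj => by rw [hz j hj]; simp), hsum] at hN2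
      norm_num at hN2
    have : 1 < Fintype.card { i // ((if v i = 0 then 0 else 1 : ℝ) : ℂ) ≠ 0 } := by
      rw [Fintype.one_lt_card_iff]
      refine ⟨⟨i, by simp [hi]⟩, ⟨j, by simp [hj]⟩, ?_⟩
      intro h
      exact hij (congrArg Subtype.val h).symm
    exact this

/-- Superadditivity. -/
lemma N_le_sum {J : Type*} [Fintype J] (b : J → Matrix (Fin d) (Fin d) ℂ)
    (hb : ∑ j, (b j)ᴴ * b j = 1) {X : Matrix (Fin d) (Fin d) ℂ} (hX : X.PosSemidef) :
    N X ≤ ∑ j, N (b j * X * (b j)ᴴ) := by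
  obtain ⟨s, hs, rfl⟩ := exists_fac hX
  have e : ∀ j, N (b j * (s * s) * (b j)ᴴ) = ‖V (s * ((b j)ᴴ * b j) * s)‖ := fun j => by
    have := N_flip (b j * s)
    rw [conjTranspose_mul, hs] at this
    simp only [Matrix.mul_assoc] at this ⊢
    exact this
  simp only [e]
  refine le_trans (le_of_eq ?_) (norm_sum_le _ _)
  rw [← V_sum, ← Finset.sum_mul, ← Finset.mul_sum, hb, Matrix.mul_one, N]

lemma N_eq_sum {J : Type*} [Fintype J] (b : J → Matrix (Fin d) (Fin d) ℂ)
    (hb : ∑ j, (b j)ᴴ * b j = 1) {s : Matrix (Fin d) (Fin d) ℂ} (hs : sᴴ = s) (h0 : s * s ≠ 0)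
    (h : ∑ j, N (b j * (s * s) * (b j)ᴴ) ≤ N (s * s)) (j : J) :
    ∃ c : ℝ, 0 ≤ c ∧ s * ((b j)ᴴ * b j) * s = (c : ℂ) • (s * s) := by
  classical
  have e : ∀ j, N (b j * (s * s) * (b j)ᴴ) = ‖V (s * ((b j)ᴴ * b j) * s)‖ := fun j => by
    have := N_flip (b j * s)
    rw [conjTranspose_mul, hs] at this
    simp only [Matrix.mul_assoc] at this ⊢
    exact this
  simp only [e] at h
  have hV : V (s * s) = ∑ j, V (s * ((b j)ᴴ * b j) * s) := by
    rw [← V_sum, ← Finset.sum_mul, ← Finset.mul_sum, hb, Matrix.mul_one]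
  rw [N, hV] at h
  rw [← Finset.add_sum_erase _ _ (Finset.mem_univ j)] at hV
  rw [← Finset.add_sum_erase _ _ (Finset.mem_univ j),
    ← Finset.add_sum_erase _ _ (Finset.mem_univ j)] at h
  have hle := norm_sum_le (Finset.univ.erase j) (fun j => V (s * ((b j)ᴴ * b j) * s))
  set x := V (s * ((b j)ᴴ * b j) * s) with hx
  set R := ∑ j ∈ Finset.univ.erase j, V (s * ((b j)ᴴ * b j) * s)
  have hray : SameRay ℝ x R := by
    rw [sameRay_iff_norm_add]
    refine le_antisymm (norm_add_le _ _) ?_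
    linarith
  have hray2 : SameRay ℝ (x + R) x := (SameRay.add_left (SameRay.refl x) hray.symm)
  have hne : x + R ≠ 0 := by
    rw [← hV]; intro h'
    exact h0 (V_inj (h'.trans V_zero.symm))
  obtain ⟨c, hc, hc'⟩ := hray2.exists_nonneg_left hne
  refine ⟨c, hc, V_inj ?_⟩
  rw [V_smul, hV, hc']

lemma word_cons {I : Type*} (a : I → Matrix (Fin d) (Fin d) ℂ) (i : I) (w : List I) :
    wordMatrix a (i :: w) = wordMatrix a w * a i := by
  simp [wordMatrix]

lemma word_snoc {I : Type*} (a : I → Matrix (Fin d) (Fin d) ℂ) (i : I) (w : List I) :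
    wordMatrix a (w ++ [i]) = a i * wordMatrix a w := by
  simp [wordMatrix]

variable {k : ℕ}

/-- The matrix of a word given as a function. -/
noncomputable def W (a : Fin k → Matrix (Fin d) (Fin d) ℂ) {n : ℕ} (w : Fin n → Fin k) :
    Matrix (Fin d) (Fin d) ℂ := wordMatrix a (List.ofFn w)

lemma W_snoc (a : Fin k → Matrix (Fin d) (Fin d) ℂ) {n : ℕ} (w : Fin n → Fin k) (i : Fin k) :
    W a (Fin.snoc w i : Fin (n + 1) → Fin k) = a i * W a w := by
  rw [W, List.ofFn_succ', List.concat_eq_append, word_snoc]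
  simp [W]

lemma sum_snoc {M : Type*} [AddCommMonoid M] {n : ℕ} (f : (Fin (n + 1) → Fin k) → M) :
    ∑ w, f w = ∑ w : Fin n → Fin k, ∑ i : Fin k, f (Fin.snoc w i : Fin (n + 1) → Fin k) := by
  rw [← (Fin.snocEquiv (fun _ : Fin (n + 1) => Fin k)).sum_comp, Fintype.sum_prod_type_right]
  rfl

/-- The `n`-step average of the norm. -/
noncomputable def S (a : Fin k → Matrix (Fin d) (Fin d) ℂ) (n : ℕ)
    (X : Matrix (Fin d) (Fin d) ℂ) : ℝ := ∑ w : Fin n → Fin k, N (W a w * X * (W a w)ᴴ)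

lemma W_sum (a : Fin k → Matrix (Fin d) (Fin d) ℂ) (ha : ∑ i, (a i)ᴴ * a i = 1) (n : ℕ) :
    ∑ w : Fin n → Fin k, (W a w)ᴴ * W a w = 1 := by
  induction n with
  | zero => simp [W, wordMatrix]
  | succ n ih =>
    rw [sum_snoc, ← ih]
    refine Finset.sum_congr rfl fun w _ => ?_
    calc _ = ∑ i, (W a w)ᴴ * ((a i)ᴴ * a i) * W a w := by
          refine Finset.sum_congr rfl fun i _ => ?_
          rw [W_snoc, conjTranspose_mul]; simp only [Matrix.mul_assoc]
      _ = _ := by rw [← Finset.sum_mul, ← Finset.mul_sum, ha, Matrix.mul_one]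

lemma W_trace_sum (a : Fin k → Matrix (Fin d) (Fin d) ℂ) (ha : ∑ i, (a i)ᴴ * a i = 1) (n : ℕ)
    (X : Matrix (Fin d) (Fin d) ℂ) :
    ∑ w : Fin n → Fin k, (W a w * X * (W a w)ᴴ).trace = X.trace := by
  calc _ = ∑ w : Fin n → Fin k, ((W a w)ᴴ * W a w * X).trace := by
        refine Finset.sum_congr rfl fun w _ => ?_
        rw [Matrix.trace_mul_comm, Matrix.mul_assoc]
    _ = _ := by rw [← Matrix.trace_sum, ← Finset.sum_mul, W_sum a ha, Matrix.one_mul]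

lemma S_zero (a : Fin k → Matrix (Fin d) (Fin d) ℂ) (X : Matrix (Fin d) (Fin d) ℂ) :
    S a 0 X = N X := by
  simp [S, W, wordMatrix]

/-- Appending words. -/
lemma S_add (a : Fin k → Matrix (Fin d) (Fin d) ℂ) (n l : ℕ) (X : Matrix (Fin d) (Fin d) ℂ) :
    S a (n + l) X = ∑ w : Fin n → Fin k, S a l (W a w * X * (W a w)ᴴ) := by
  rw [S, ← (Fin.appendEquiv n l).sum_comp, Fintype.sum_prod_type]
  refine Finset.sum_congr rfl fun w _ => Finset.sum_congr rfl fun u _ => ?_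
  have : W a (Fin.append w u) = W a u * W a w := by
    rw [W, List.ofFn_fin_append]
    simp [W, wordMatrix]
  change N (W a (Fin.append w u) * X * (W a (Fin.append w u))ᴴ) = _
  rw [this, conjTranspose_mul]
  simp only [Matrix.mul_assoc]

lemma S_smul (a : Fin k → Matrix (Fin d) (Fin d) ℂ) (n : ℕ) (c : ℝ) (hc : 0 ≤ c)
    (X : Matrix (Fin d) (Fin d) ℂ) : S a n ((c : ℂ) • X) = c * S a n X := by
  simp only [S, Finset.mul_sum, Matrix.mul_smul, Matrix.smul_mul, N_smul c hc]

lemma S_ge (a : Fin k → Matrix (Fin d) (Fin d) ℂ) (ha : ∑ i, (a i)ᴴ * a i = 1) (n : ℕ)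
    {X : Matrix (Fin d) (Fin d) ℂ} (hX : X.PosSemidef) : N X ≤ S a n X :=
  N_le_sum (fun w : Fin n → Fin k => W a w) (W_sum a ha n) hX

lemma S_mono (a : Fin k → Matrix (Fin d) (Fin d) ℂ) (ha : ∑ i, (a i)ᴴ * a i = 1)
    {X : Matrix (Fin d) (Fin d) ℂ} (hX : X.PosSemidef) : Monotone (fun n => S a n X) := by
  intro n m h
  obtain ⟨l, rfl⟩ := Nat.exists_eq_add_of_le h
  change S a n X ≤ S a (n + l) X
  rw [S_add]
  exact Finset.sum_le_sum fun w _ => S_ge a ha l (hX.mul_mul_conjTranspose_same _)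

lemma S_le (a : Fin k → Matrix (Fin d) (Fin d) ℂ) (ha : ∑ i, (a i)ᴴ * a i = 1) (n : ℕ)
    {X : Matrix (Fin d) (Fin d) ℂ} (hX : X.PosSemidef) : S a n X ≤ X.trace.re := by
  rw [← W_trace_sum a ha n X, Complex.re_sum]
  exact Finset.sum_le_sum fun w _ => N_le_trace (hX.mul_mul_conjTranspose_same _)

lemma N_cont : Continuous (N : Matrix (Fin d) (Fin d) ℂ → ℝ) := by
  unfold N V
  fun_prop

lemma S_cont (a : Fin k → Matrix (Fin d) (Fin d) ℂ) (n : ℕ) : Continuous (S a n) := by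
  unfold S
  refine continuous_finsetSum _ fun w _ => N_cont.comp ?_
  fun_prop

/-- There is a dark projection of rank at least two. -/
def Dark (a : Fin k → Matrix (Fin d) (Fin d) ℂ) : Prop :=
  ∃ p : Matrix (Fin d) (Fin d) ℂ, p.IsHermitian ∧ p * p = p ∧ 2 ≤ p.rank ∧
    ∀ w : List (Fin k), ∃ l : ℝ, 0 ≤ l ∧
      p * (wordMatrix a w)ᴴ * wordMatrix a w * p = (l : ℂ) • p

lemma dark_of_eq (a : Fin k → Matrix (Fin d) (Fin d) ℂ) (ha : ∑ i, (a i)ᴴ * a i = 1)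
    {X : Matrix (Fin d) (Fin d) ℂ} (hX : X.PosSemidef) (ht : X.trace = 1) (hN : N X < 1)
    (h : ∀ l, S a l X ≤ N X) : Dark a := by
  obtain ⟨s, r, p, hs, rfl, hrs, hsr, hp, hpp, hrk⟩ := exists_supp hX ht hN
  refine ⟨p, hp, hpp, hrk, fun w => ?_⟩
  have h0 : s * s ≠ 0 := by
    intro h0; rw [h0] at ht; simp at ht
  obtain ⟨c, hc, e⟩ := N_eq_sum (fun w : Fin w.length → Fin k => W a w) (W_sum a ha _) hs h0
    (h w.length) w.get
  have hw : W a w.get = wordMatrix a w := by simp [W]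
  simp only [hw] at e
  refine ⟨c, hc, ?_⟩
  calc _ = (r * s) * (wordMatrix a w)ᴴ * wordMatrix a w * (s * r) := by rw [hrs, hsr]
    _ = r * (s * ((wordMatrix a w)ᴴ * wordMatrix a w) * s) * r := by simp only [Matrix.mul_assoc]
    _ = (c : ℂ) • ((r * s) * (s * r)) := by
      rw [e]; simp only [Matrix.mul_smul, Matrix.smul_mul, Matrix.mul_assoc]
    _ = _ := by rw [hrs, hsr, hpp]

lemma compact_set (e : ℝ) : IsCompact {Y : Matrix (Fin d) (Fin d) ℂ |
    (Yᴴ * Y).trace = 1 ∧ N (Yᴴ * Y) ≤ e} := by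
  let G : EuclideanSpace ℂ (Fin d × Fin d) → Matrix (Fin d) (Fin d) ℂ :=
    fun x => Matrix.of fun i j => x (i, j)
  have hG : Continuous G := by
    refine continuous_pi fun i => continuous_pi fun j => ?_
    change Continuous fun x : EuclideanSpace ℂ (Fin d × Fin d) => x (i, j)
    fun_prop
  have hc := (isCompact_closedBall (0 : EuclideanSpace ℂ (Fin d × Fin d)) 1).image hG
  refine hc.of_isClosed_subset ?_ ?_
  · refine (isClosed_eq ?_ continuous_const).inter (isClosed_le (N_cont.comp ?_) continuous_const)
    · fun_prop
    · fun_prop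
  · rintro Y ⟨h, -⟩
    refine ⟨V Y, ?_, rfl⟩
    have := N_sq Y
    rw [h] at this
    rw [mem_closedBall_zero_iff]
    have h2 : N Y ^ 2 ≤ 1 := by rw [this]; simp
    exact (sq_le_one_iff₀ (norm_nonneg _)).1 h2

lemma exists_gap (a : Fin k → Matrix (Fin d) (Fin d) ℂ) (ha : ∑ i, (a i)ᴴ * a i = 1)
    (hD : ¬ Dark a) {ε : ℝ} (hε : 0 < ε) :
    ∃ (l : ℕ) (δ : ℝ), 0 < δ ∧ ∀ X : Matrix (Fin d) (Fin d) ℂ, X.PosSemidef → X.trace = 1 →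
      N X ≤ 1 - ε → δ ≤ S a l X - N X := by
  have hK := compact_set (d := d) (1 - ε)
  set K := {Y : Matrix (Fin d) (Fin d) ℂ | (Yᴴ * Y).trace = 1 ∧ N (Yᴴ * Y) ≤ 1 - ε} with hKdef
  have hcont : ∀ l, Continuous fun Y : Matrix (Fin d) (Fin d) ℂ => S a l (Yᴴ * Y) - N (Yᴴ * Y) := by
    intro l
    have : Continuous fun Y : Matrix (Fin d) (Fin d) ℂ => Yᴴ * Y := by fun_prop
    exact ((S_cont a l).comp this).sub (N_cont.comp this)
  obtain ⟨t, ht⟩ := hK.elim_finite_subcover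
    (fun l : ℕ => {Y : Matrix (Fin d) (Fin d) ℂ | 0 < S a l (Yᴴ * Y) - N (Yᴴ * Y)})
    (fun l => isOpen_lt continuous_const (hcont l)) (by
      rintro Y ⟨h1, h2⟩
      rw [Set.mem_iUnion]
      by_contra! hcon
      refine hD (dark_of_eq a ha (posSemidef_conjTranspose_mul_self Y) h1 (by linarith) fun l => ?_)
      have := hcon l
      simp only [Set.mem_ofPred_eq, not_lt] at this
      linarith)
  have hpos : ∀ Y ∈ K, 0 < S a (t.sup id) (Yᴴ * Y) - N (Yᴴ * Y) := by
    intro Y hY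
    have := ht hY
    simp only [Set.mem_iUnion, Set.mem_ofPred_eq] at this
    obtain ⟨l, hl, h⟩ := this
    have := S_mono a ha (posSemidef_conjTranspose_mul_self Y) (Finset.le_sup (f := id) hl)
    simp only [id] at this
    linarith
  have key : ∃ δ : ℝ, 0 < δ ∧ ∀ Y ∈ K, δ ≤ S a (t.sup id) (Yᴴ * Y) - N (Yᴴ * Y) := by
    rcases K.eq_empty_or_nonempty with h | h
    · exact ⟨1, one_pos, by simp [h]⟩
    · obtain ⟨Y, hY, hm⟩ := hK.exists_isMinOn h (hcont (t.sup id)).continuousOn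
      exact ⟨_, hpos Y hY, fun Z hZ => hm hZ⟩
  obtain ⟨δ, hδ, h⟩ := key
  refine ⟨t.sup id, δ, hδ, fun X hX htr hN => ?_⟩
  obtain ⟨s, hs, rfl⟩ := exists_fac hX
  have := h s (by rw [hKdef]; simp only [Set.mem_ofPred_eq, hs]; exact ⟨htr, hN⟩)
  rwa [hs] at this

lemma gap_hom (a : Fin k → Matrix (Fin d) (Fin d) ℂ) (ha : ∑ i, (a i)ᴴ * a i = 1)
    (hD : ¬ Dark a) {ε : ℝ} (hε : 0 < ε) :
    ∃ (l : ℕ) (δ : ℝ), 0 < δ ∧ ∀ X : Matrix (Fin d) (Fin d) ℂ, X.PosSemidef →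
      δ * ((1 - ε) * X.trace.re - N X) ≤ S a l X - N X := by
  obtain ⟨l, δ, hδ, h⟩ := exists_gap a ha hD hε
  refine ⟨l, δ, hδ, fun X hX => ?_⟩
  have hS := S_ge a ha l hX
  have hNn := N_nonneg X
  rcases le_or_gt ((1 - ε) * X.trace.re) (N X) with h1 | h1
  · nlinarith
  · have ht0 : 0 < X.trace.re := by
      rcases (trace_nonneg hX).lt_or_eq with h' | h'
      · exact h'
      · rw [← h'] at h1; linarith
    set t := X.trace.re with htdef
    have hti : (0 : ℝ) ≤ t⁻¹ := inv_nonneg.2 ht0.le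
    have hX' : (((t⁻¹ : ℝ) : ℂ) • X).PosSemidef :=
      hX.smul (by exact_mod_cast hti)
    have := h _ hX' (by
      rw [Matrix.trace_smul, trace_eq hX, ← htdef, smul_eq_mul, ← Complex.ofReal_mul,
        inv_mul_cancel₀ ht0.ne', Complex.ofReal_one]) (by
      rw [N_smul _ hti, inv_mul_le_iff₀ ht0]; linarith)
    rw [N_smul _ hti, S_smul _ _ _ hti, ← mul_sub, le_inv_mul_iff₀ ht0] at this
    refine le_trans ?_ this
    nlinarith [mul_pos hδ (mul_pos hε ht0), mul_nonneg hδ.le hNn]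

lemma S_tendsto (a : Fin k → Matrix (Fin d) (Fin d) ℂ) (ha : ∑ i, (a i)ᴴ * a i = 1)
    (hD : ¬ Dark a) {X : Matrix (Fin d) (Fin d) ℂ} (hX : X.PosSemidef) (ht : X.trace = 1) :
    Tendsto (fun n => S a n X) atTop (nhds 1) := by
  have hle : ∀ n, S a n X ≤ 1 := fun n => by simpa [ht] using S_le a ha n hX
  have hlim := tendsto_atTop_ciSup (S_mono a ha hX) ⟨1, by rintro _ ⟨n, rfl⟩; exact hle n⟩
  set s := ⨆ n, S a n X with hs
  have hs1 : s ≤ 1 := le_of_tendsto' hlim hle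
  have hs2 : 1 ≤ s := by
    refine le_of_forall_pos_le_add fun ε hε => ?_
    obtain ⟨l, δ, hδ, h⟩ := gap_hom a ha hD hε
    have hn : ∀ n, δ * ((1 - ε) - S a n X) ≤ S a (n + l) X - S a n X := by
      intro n
      rw [S_add, S, ← Finset.sum_sub_distrib]
      have h1 : (1 : ℝ) = ∑ w : Fin n → Fin k, (W a w * X * (W a w)ᴴ).trace.re := by
        rw [← Complex.re_sum, W_trace_sum a ha, ht]; simp
      have : δ * ((1 - ε) - ∑ w : Fin n → Fin k, N (W a w * X * (W a w)ᴴ)) =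
        ∑ w : Fin n → Fin k, δ * ((1 - ε) * (W a w * X * (W a w)ᴴ).trace.re -
          N (W a w * X * (W a w)ᴴ)) := by
        rw [← Finset.mul_sum, Finset.sum_sub_distrib, ← Finset.mul_sum, ← h1, mul_one]
      rw [this]
      exact Finset.sum_le_sum fun w _ => h _ (hX.mul_mul_conjTranspose_same _)
    have hA : Tendsto (fun n => δ * ((1 - ε) - S a n X)) atTop (nhds (δ * ((1 - ε) - s))) :=
      (hlim.const_sub _).const_mul _
    have hB : Tendsto (fun n => S a (n + l) X - S a n X) atTop (nhds (s - s)) :=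
      (hlim.comp (tendsto_add_atTop_nat l)).sub hlim
    have := le_of_tendsto_of_tendsto' hA hB hn
    rw [sub_self] at this
    have := nonpos_of_mul_nonpos_right this hδ
    linarith
  rwa [le_antisymm hs1 hs2] at hlim

/-- The first `n` letters. -/
def res (k n : ℕ) (ω : ℕ → Fin k) : Fin n → Fin k := fun j => ω j

lemma res_meas (n : ℕ) : Measurable (res k n) :=
  measurable_pi_lambda _ fun _ => measurable_pi_apply _

/-- The trajectory as a function of the finite word. -/
noncomputable def g (a : Fin k → Matrix (Fin d) (Fin d) ℂ) (θ₀ σ : Matrix (Fin d) (Fin d) ℂ)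
    {n : ℕ} (w : Fin n → Fin k) : Matrix (Fin d) (Fin d) ℂ :=
  if (W a w * θ₀ * (W a w)ᴴ).trace ≠ 0 then
    ((W a w * θ₀ * (W a w)ᴴ).trace)⁻¹ • (W a w * θ₀ * (W a w)ᴴ) else σ

lemma traj_eq (a : Fin k → Matrix (Fin d) (Fin d) ℂ) (θ₀ σ : Matrix (Fin d) (Fin d) ℂ) (n : ℕ)
    (ω : ℕ → Fin k) : traj a θ₀ σ n ω = g a θ₀ σ (res k n ω) := rfl

lemma g_density (a : Fin k → Matrix (Fin d) (Fin d) ℂ) {θ₀ σ : Matrix (Fin d) (Fin d) ℂ}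
    (hθ₀ : θ₀.PosSemidef) (hσ : σ.PosSemidef ∧ σ.trace = 1) {n : ℕ} (w : Fin n → Fin k) :
    (g a θ₀ σ w).PosSemidef ∧ (g a θ₀ σ w).trace = 1 := by
  have hX := hθ₀.mul_mul_conjTranspose_same (W a w)
  unfold g
  split_ifs with h
  · refine ⟨?_, ?_⟩
    · rw [trace_eq hX, ← Complex.ofReal_inv]
      refine hX.smul ?_
      exact_mod_cast inv_nonneg.2 (trace_nonneg hX)
    · rw [Matrix.trace_smul, smul_eq_mul, inv_mul_cancel₀ h]
  · exact hσ

lemma g_weight (a : Fin k → Matrix (Fin d) (Fin d) ℂ) {θ₀ : Matrix (Fin d) (Fin d) ℂ}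
    (σ : Matrix (Fin d) (Fin d) ℂ) (hθ₀ : θ₀.PosSemidef) {n : ℕ} (w : Fin n → Fin k) :
    (W a w * θ₀ * (W a w)ᴴ).trace.re * N (g a θ₀ σ w) = N (W a w * θ₀ * (W a w)ᴴ) := by
  have hX := hθ₀.mul_mul_conjTranspose_same (W a w)
  unfold g
  split_ifs with h
  · have h' : (W a w * θ₀ * (W a w)ᴴ).trace.re ≠ 0 := by
      intro h'; rw [trace_eq hX, h'] at h; simp at h
    rw [trace_eq hX, ← Complex.ofReal_inv, N_smul _ (inv_nonneg.2 (trace_nonneg hX)),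
      Complex.ofReal_re, mul_inv_cancel_left₀ h']
  · rw [not_not] at h
    have h1 := N_le_trace hX
    have h2 := N_nonneg (W a w * θ₀ * (W a w)ᴴ)
    rw [h] at h1 ⊢
    simp only [Complex.zero_re] at h1 ⊢
    linarith

lemma int_cyl (a : Fin k → Matrix (Fin d) (Fin d) ℂ) {θ₀ : Matrix (Fin d) (Fin d) ℂ}
    (σ : Matrix (Fin d) (Fin d) ℂ) (hθ₀ : θ₀.PosSemidef)
    (P : Measure (ℕ → Fin k)) [IsProbabilityMeasure P] (hP : CylinderCondition a θ₀ P)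
    (n : ℕ) (B : Set (Fin n → Fin k)) :
    ∫ ω in res k n ⁻¹' B, N (traj a θ₀ σ n ω) ∂P =
      ∑ w, B.indicator (fun w => N (W a w * θ₀ * (W a w)ᴴ)) w := by
  have hB : MeasurableSet B := B.toFinite.measurableSet
  have : IsProbabilityMeasure (P.map (res k n)) :=
    Measure.isProbabilityMeasure_map (res_meas n).aemeasurable
  simp only [traj_eq]
  rw [← setIntegral_map (f := fun w => N (g a θ₀ σ w)) hB
    (measurable_of_finite _).aestronglyMeasurable (res_meas n).aemeasurable,
    ← integral_indicator hB, integral_fintype (Integrable.of_finite)]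
  refine Finset.sum_congr rfl fun w _ => ?_
  by_cases hw : w ∈ B
  · rw [Set.indicator_of_mem hw, Set.indicator_of_mem hw, ← g_weight a σ hθ₀ w, smul_eq_mul]
    congr 1
    rw [measureReal_def, Measure.map_apply (res_meas n) (measurableSet_singleton w)]
    have e : res k n ⁻¹' {w} = {ω | ∀ j : Fin n, ω (j : ℕ) = w j} := by
      ext ω
      simp [res, funext_iff]
    rw [e, hP n w, ENNReal.toReal_ofReal]
    · rfl
    · exact trace_nonneg (hθ₀.mul_mul_conjTranspose_same (W a w))
  · rw [Set.indicator_of_notMem hw, Set.indicator_of_notMem hw, smul_zero]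

/-- The natural filtration. -/
def filt (k : ℕ) : Filtration ℕ (inferInstance : MeasurableSpace (ℕ → Fin k)) where
  seq n := MeasurableSpace.comap (res k n) inferInstance
  mono' := by
    intro n m h
    have : res k n = (fun (w : Fin m → Fin k) (j : Fin n) => w (Fin.castLE h j)) ∘ res k m := rfl
    change MeasurableSpace.comap (res k n) _ ≤ MeasurableSpace.comap (res k m) _
    rw [this, ← MeasurableSpace.comap_comp]
    exact MeasurableSpace.comap_mono (measurable_of_finite _).comap_le
  le' n := (res_meas n).comap_le

lemma submart (a : Fin k → Matrix (Fin d) (Fin d) ℂ) (ha : ∑ i, (a i)ᴴ * a i = 1)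
    {θ₀ σ : Matrix (Fin d) (Fin d) ℂ} (hθ₀ : θ₀.PosSemidef)
    (P : Measure (ℕ → Fin k)) [IsProbabilityMeasure P] (hP : CylinderCondition a θ₀ P) :
    Submartingale (fun n ω => N (traj a θ₀ σ n ω)) (filt k) P := by
  refine submartingale_of_setIntegral_le_succ ?_ ?_ ?_
  · intro n
    simp only [traj_eq]
    have h1 : Measurable[MeasurableSpace.comap (res k n) inferInstance] (res k n) :=
      comap_measurable _
    have h2 : Measurable (fun w : Fin n → Fin k => N (g a θ₀ σ w)) := measurable_of_finite _
    exact (h2.comp h1).stronglyMeasurable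
  · intro n
    simp only [traj_eq]
    have : IsProbabilityMeasure (P.map (res k n)) :=
      Measure.isProbabilityMeasure_map (res_meas n).aemeasurable
    have h2 : Integrable (fun w : Fin n → Fin k => N (g a θ₀ σ w)) (P.map (res k n)) :=
      Integrable.of_finite
    exact h2.comp_measurable (res_meas n)
  · rintro n _ ⟨B, -, rfl⟩
    rw [int_cyl a σ hθ₀ P hP]
    have e : res k n ⁻¹' B = res k (n + 1) ⁻¹' {w | (fun j : Fin n => w j.castSucc) ∈ B} := rfl
    rw [e, int_cyl a σ hθ₀ P hP, sum_snoc]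
    refine Finset.sum_le_sum fun w _ => ?_
    by_cases hw : w ∈ B
    · rw [Set.indicator_of_mem hw]
      refine (N_le_sum a ha (hθ₀.mul_mul_conjTranspose_same (W a w))).trans (le_of_eq ?_)
      refine Finset.sum_congr rfl fun i _ => ?_
      rw [Set.indicator_of_mem (by simpa using hw), W_snoc, conjTranspose_mul]
      simp only [Matrix.mul_assoc]
    · rw [Set.indicator_of_notMem hw]
      refine Finset.sum_nonneg fun i _ => Set.indicator_nonneg (fun _ _ => N_nonneg _) _

lemma ae_N (a : Fin k → Matrix (Fin d) (Fin d) ℂ) (ha : ∑ i, (a i)ᴴ * a i = 1)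
    (hD : ¬ Dark a)
    {θ₀ σ : Matrix (Fin d) (Fin d) ℂ} (hθ₀ : θ₀.PosSemidef) (ht : θ₀.trace = 1)
    (hσ : σ.PosSemidef ∧ σ.trace = 1)
    (P : Measure (ℕ → Fin k)) [IsProbabilityMeasure P] (hP : CylinderCondition a θ₀ P) :
    ∀ᵐ ω ∂P, Tendsto (fun n => N (traj a θ₀ σ n ω)) atTop (nhds 1) := by
  have hsub := submart a ha (σ := σ) hθ₀ P hP
  have hle : ∀ n ω, N (traj a θ₀ σ n ω) ≤ 1 := fun n ω => by
    obtain ⟨h1, h2⟩ := g_density a hθ₀ hσ (res k n ω)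
    rw [traj_eq]
    simpa [h2] using N_le_trace h1
  have hb : ∀ n ω, ‖N (traj a θ₀ σ n ω)‖ ≤ 1 := fun n ω => by
    rw [Real.norm_of_nonneg (N_nonneg _)]; exact hle n ω
  have hconv := hsub.ae_tendsto_limitProcess (R := 1) (fun n => by
    refine (eLpNorm_le_of_ae_bound (C := 1) (Eventually.of_forall (hb n))).trans ?_
    simp)
  set L := Filtration.limitProcess (fun n ω => N (traj a θ₀ σ n ω)) (filt k) P with hL
  have hLm : AEStronglyMeasurable L P :=
    (Filtration.stronglyMeasurable_limit_process' ).aestronglyMeasurable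
  have hLle : ∀ᵐ ω ∂P, L ω ≤ 1 := by
    filter_upwards [hconv] with ω h using le_of_tendsto' h fun n => hle n ω
  have hLge : ∀ᵐ ω ∂P, 0 ≤ L ω := by
    filter_upwards [hconv] with ω h using ge_of_tendsto' h fun n => N_nonneg _
  have hLi : Integrable L P := by
    refine Integrable.of_bound hLm 1 ?_
    filter_upwards [hLle, hLge] with ω h1 h2
    rwa [Real.norm_of_nonneg h2]
  have hlimInt := tendsto_integral_of_dominated_convergence (fun _ => (1 : ℝ))
    (fun n => (hsub.integrable n).aestronglyMeasurable) (integrable_const _)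
    (fun n => Eventually.of_forall (hb n)) hconv
  have hS : ∀ n, ∫ ω, N (traj a θ₀ σ n ω) ∂P = S a n θ₀ := by
    intro n
    have := int_cyl a σ hθ₀ P hP n Set.univ
    simpa [S] using this
  simp only [hS] at hlimInt
  have hLint : ∫ ω, L ω ∂P = 1 := tendsto_nhds_unique hlimInt (S_tendsto a ha hD hθ₀ ht)
  have hz : (fun ω => 1 - L ω) =ᵐ[P] 0 := by
    refine (integral_eq_zero_iff_of_nonneg_ae ?_ ((integrable_const _).sub hLi)).1 ?_
    · filter_upwards [hLle] with ω h
      simpa using h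
    · rw [integral_sub' (integrable_const _) hLi, hLint]; simp
  filter_upwards [hconv, hz] with ω h1 h2
  have : L ω = 1 := by
    simp only [Pi.zero_apply] at h2; linarith
  rwa [this] at h1

end QPur

/-- Either the quantum trajectory purifies with probability 1, or there exists a dark
projection of rank at least two. -/
theorem purification_or_dark_projection {d k : ℕ}
    (a : Fin k → Matrix (Fin d) (Fin d) ℂ)
    (ha : ∑ i, (a i)ᴴ * a i = 1)
    (θ₀ : Matrix (Fin d) (Fin d) ℂ)
    (hθ₀ : θ₀.PosSemidef ∧ θ₀.trace = 1)
    (σ : Matrix (Fin d) (Fin d) ℂ)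
    (hσ : σ.PosSemidef ∧ σ.trace = 1)
    (P : Measure (ℕ → Fin k)) [IsProbabilityMeasure P]
    (hP : CylinderCondition a θ₀ P) :
    (∀ᵐ ω ∂P, ∀ m : ℕ, 1 ≤ m →
        Tendsto (fun n : ℕ => ((traj a θ₀ σ n ω) ^ m).trace) atTop (nhds 1)) ∨
    (∃ p : Matrix (Fin d) (Fin d) ℂ, p.IsHermitian ∧ p * p = p ∧ 2 ≤ p.rank ∧
        ∀ w : List (Fin k), ∃ l : ℝ, 0 ≤ l ∧
          p * (wordMatrix a w)ᴴ * wordMatrix a w * p = (l : ℂ) • p) := by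
  by_cases hD : QPur.Dark a
  · exact Or.inr hD
  left
  filter_upwards [QPur.ae_N a ha hD hθ₀.1 hθ₀.2 hσ P hP] with ω hω m hm
  obtain ⟨m, rfl⟩ : ∃ r, m = r + 1 := ⟨m - 1, by omega⟩
  rw [tendsto_iff_norm_sub_tendsto_zero]
  have h0 : Tendsto (fun n => (m : ℝ) * (1 - QPur.N (traj a θ₀ σ n ω) ^ 2)) atTop (nhds 0) := by
    have := ((hω.pow 2).const_sub 1).const_mul (m : ℝ)
    simpa using this
  refine squeeze_zero (fun n => norm_nonneg _) (fun n => ?_) h0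
  obtain ⟨h1, h2⟩ := QPur.g_density a hθ₀.1 hσ (QPur.res k n ω)
  exact QPur.trace_pow_bound h1 h2 m
end

section
/- Let (a_1,…,a_k) be a perfect measurement on the complex d×d matrices, let θ₀ be a density matrix, and let P be a probability measure on Ω = {1,…,k}^ℕ satisfying the cylinder condition for θ₀. Then at least one of the following alternatives holds: (i) for every m ∈ ℕ, lim_{n→∞} tr(Θ_n^m) = 1 P-almost surely; or (ii) there exists a density matrix ρ with tr(ρ²) < 1 (i.e. ρ is a mixed state) such that for every i = 1,…,k there exist λ_i ≥ 0 and a unitary d×d matrix u_i with a_i ρ a_i* = λ_i · u_i ρ u_i*. -/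
open Matrix MeasureTheory Filter
open scoped ComplexOrder

lemma unitary_equiv_of_charpoly {d : ℕ} {A B : Matrix (Fin d) (Fin d) ℂ}
    (hA : A.IsHermitian) (hB : B.IsHermitian) (h : A.charpoly = B.charpoly) :
    ∃ u ∈ Matrix.unitaryGroup (Fin d) ℂ, A = u * B * uᴴ := by
  have he := (hA.eigenvalues_eq_eigenvalues_iff hB).2 h
  have h1 := hA.spectral_theorem
  have h2 := hB.spectral_theorem
  rw [Unitary.conjStarAlgAut_apply] at h1 h2
  rw [he] at h1
  refine ⟨(hA.eigenvectorUnitary * star hB.eigenvectorUnitary : Matrix.unitaryGroup (Fin d) ℂ), 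
    Subtype.prop _, ?_⟩
  have hV : (star (hB.eigenvectorUnitary : Matrix (Fin d) (Fin d) ℂ)) * hB.eigenvectorUnitary = 1 := 
    Unitary.coe_star_mul_self _
  set D : Matrix (Fin d) (Fin d) ℂ := diagonal (RCLike.ofReal ∘ hB.eigenvalues)
  refine h1.trans ?_
  conv_rhs => enter [1, 2]; rw [h2]
  simp only [← star_eq_conjTranspose, Submonoid.coe_mul, Unitary.coe_star, star_mul, star_star]
  generalize (hA.eigenvectorUnitary : Matrix (Fin d) (Fin d) ℂ) = U at *
  generalize (hB.eigenvectorUnitary : Matrix (Fin d) (Fin d) ℂ) = V at *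
  calc U * D * star U = U * (1:Matrix (Fin d) (Fin d) ℂ) * D * (1 : Matrix (Fin d) (Fin d) ℂ) * star U := by simp
    _ = _ := by rw [← hV]; simp only [mul_assoc]

lemma exists_factor {d : ℕ} {T : Matrix (Fin d) (Fin d) ℂ} (hT : T.PosSemidef) :
    ∃ S : Matrix (Fin d) (Fin d) ℂ, T = S * Sᴴ := by
  open scoped MatrixOrder in
  obtain ⟨b, hb⟩ := CStarAlgebra.nonneg_iff_eq_star_mul_self.1 hT.nonneg
  exact ⟨bᴴ, by simpa [star_eq_conjTranspose] using hb⟩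

lemma trace_sq_eq {d : ℕ} {T : Matrix (Fin d) (Fin d) ℂ} (hT : T.IsHermitian) :
    (T * T).trace = ∑ i, ((hT.eigenvalues i ^ 2 : ℝ) : ℂ) := by
  have h1 := hT.spectral_theorem
  rw [Unitary.conjStarAlgAut_apply] at h1
  have hV : (star (hT.eigenvectorUnitary : Matrix (Fin d) (Fin d) ℂ)) * hT.eigenvectorUnitary = 1 := 
    Unitary.coe_star_mul_self _
  conv_lhs => rw [h1]
  generalize (hT.eigenvectorUnitary : Matrix (Fin d) (Fin d) ℂ) = V at *
  set D : Matrix (Fin d) (Fin d) ℂ := diagonal (RCLike.ofReal ∘ hT.eigenvalues) with hD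
  have : V * D * star V * (V * D * star V) = V * (D * (star V * V) * D) * star V := by
    simp only [mul_assoc]
  rw [this, hV, trace_mul_cycle, hV, hD]
  simp [trace, sq]

lemma trace_sq_re_le {d : ℕ} {T : Matrix (Fin d) (Fin d) ℂ} (hT : T.PosSemidef) :
    (T * T).trace.re ≤ T.trace.re ^ 2 := by
  rw [trace_sq_eq hT.1, hT.1.trace_eq_sum_eigenvalues]
  simp only [Complex.re_sum, Complex.ofReal_re, RCLike.ofReal_eq_complex_ofReal]
  exact Finset.sum_sq_le_sq_sum_of_nonneg fun i _ => hT.eigenvalues_nonneg i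

lemma idem_of_trace_sq {d : ℕ} {T : Matrix (Fin d) (Fin d) ℂ} (hT : T.PosSemidef)
    (h1 : T.trace = 1) (h2 : 1 ≤ (T * T).trace.re) : T * T = T := by
  have ht := hT.1.trace_eq_sum_eigenvalues
  have h3 : ∑ i, hT.1.eigenvalues i = 1 := by
    rw [h1] at ht
    have h4 := congrArg Complex.re ht
    simpa using h4.symm
  have h0 := hT.eigenvalues_nonneg
  have hle : ∀ i, hT.1.eigenvalues i ≤ 1 := fun i => by
    rw [← h3]; exact Finset.single_le_sum (fun i _ => h0 i) (Finset.mem_univ i)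
  rw [trace_sq_eq hT.1] at h2
  simp only [Complex.re_sum, Complex.ofReal_re] at h2
  have hz : ∑ i, (hT.1.eigenvalues i - hT.1.eigenvalues i ^ 2) = 0 := by
    apply le_antisymm
    · rw [Finset.sum_sub_distrib, h3]; linarith
    · exact Finset.sum_nonneg fun i _ => by nlinarith [h0 i, hle i]
  rw [Finset.sum_eq_zero_iff_of_nonneg (fun i _ => by nlinarith [h0 i, hle i])] at hz
  have hs := hT.1.spectral_theorem
  rw [Unitary.conjStarAlgAut_apply] at hs
  have hV : (star (hT.1.eigenvectorUnitary : Matrix (Fin d) (Fin d) ℂ)) * hT.1.eigenvectorUnitary = 1 := 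
    Unitary.coe_star_mul_self _
  set D : Matrix (Fin d) (Fin d) ℂ := diagonal (RCLike.ofReal ∘ hT.1.eigenvalues) with hD
  have hDD : D * D = D := by
    rw [hD, diagonal_mul_diagonal]
    congr 1; ext i
    have := hz i (Finset.mem_univ i)
    have h4 : hT.1.eigenvalues i * hT.1.eigenvalues i = hT.1.eigenvalues i := by nlinarith
    simp only [Function.comp]
    exact_mod_cast congrArg (fun x : ℝ => (x : ℂ)) h4
  generalize (hT.1.eigenvectorUnitary : Matrix (Fin d) (Fin d) ℂ) = V at *
  have : V * D * star V * (V * D * star V) = V * (D * (star V * V) * D) * star V := by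
    simp only [mul_assoc]
  rw [hV, mul_one, hDD] at this
  conv_lhs => rw [hs, this]
  exact hs.symm

lemma isClosed_density {d : ℕ} :
    IsClosed {T : Matrix (Fin d) (Fin d) ℂ | T.PosSemidef ∧ T.trace = 1} := by
  have : {T : Matrix (Fin d) (Fin d) ℂ | T.PosSemidef ∧ T.trace = 1} = 
    {T | Tᴴ = T} ∩ (⋂ x : Fin d → ℂ, {T | 0 ≤ star x ⬝ᵥ (T *ᵥ x)}) ∩ {T | T.trace = 1} := by
    ext T
    simp [Matrix.posSemidef_iff_dotProduct_mulVec, IsHermitian]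
  rw [this]
  refine ((isClosed_eq (by fun_prop) (by fun_prop)).inter (isClosed_iInter fun x => ?_)).inter
    (isClosed_eq (by fun_prop) (by fun_prop))
  exact isClosed_le (by fun_prop) (by fun_prop)

lemma isCompact_density {d : ℕ} :
    IsCompact {T : Matrix (Fin d) (Fin d) ℂ | T.PosSemidef ∧ T.trace = 1} := by
  have hc : IsCompact (Set.univ.pi fun _ : Fin d => Set.univ.pi fun _ : Fin d => 
    Metric.closedBall (0:ℂ) 1) :=
    isCompact_univ_pi fun i => isCompact_univ_pi fun j => isCompact_closedBall _ _
  refine IsCompact.of_isClosed_subset hc isClosed_density ?_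
  rintro T ⟨hT, h1⟩ i - j -
  have h := trace_sq_re_le hT
  rw [h1] at h
  have h2 : (T * T).trace.re = ∑ i, ∑ j, ‖T i j‖ ^ 2 := by
    conv_lhs => enter [1, 1, 1]; rw [← hT.1]
    rw [Finset.sum_comm]
    simp only [trace, diag, mul_apply, conjTranspose_apply, Complex.re_sum]
    refine Finset.sum_congr rfl fun i _ => Finset.sum_congr rfl fun j _ => ?_
    rw [← Complex.normSq_eq_norm_sq]
    simp [Complex.normSq_apply]
  rw [h2] at h
  have h3 : ‖T i j‖ ^ 2 ≤ ∑ i, ∑ j, ‖T i j‖ ^ 2 := 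
    (Finset.single_le_sum (f := fun j => ‖T i j‖^2) (fun _ _ => by positivity) (Finset.mem_univ j)).trans
    (Finset.single_le_sum (f := fun i => ∑ j, ‖T i j‖^2) (fun _ _ => by positivity) (Finset.mem_univ i))
  simp at h
  rw [mem_closedBall_zero_iff]
  nlinarith [norm_nonneg (T i j)]

noncomputable def Qf {d : ℕ} (a θ : Matrix (Fin d) (Fin d) ℂ) : ℝ :=
  ((a * θ * aᴴ) * (a * θ * aᴴ)).trace.re
    - 2 * (a * θ * aᴴ).trace.re * (a * (θ * θ) * aᴴ).trace.re
    + (a * θ * aᴴ).trace.re ^ 2 * (θ * θ).trace.re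

noncomputable def sf {d : ℕ} (T : Matrix (Fin d) (Fin d) ℂ) : ℝ :=
  (T * T).trace.re / T.trace.re

lemma Qf_eq {d : ℕ} (a S : Matrix (Fin d) (Fin d) ℂ) :
    Qf a (S * Sᴴ) = 
      (((a * S)ᴴ * (a * S) - (((a * (S * Sᴴ) * aᴴ).trace.re : ℝ) : ℂ) • (Sᴴ * S))ᴴ
      * ((a * S)ᴴ * (a * S) - (((a * (S * Sᴴ) * aᴴ).trace.re : ℝ) : ℂ) • (Sᴴ * S))).trace.re := by
  unfold Qf
  generalize (a * (S * Sᴴ) * aᴴ).trace.re = p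
  have h1 : ((a * (S * Sᴴ) * aᴴ) * (a * (S * Sᴴ) * aᴴ)).trace = 
      ((Sᴴ * aᴴ) * (a * S) * ((Sᴴ * aᴴ) * (a * S))).trace := by
    rw [show (a * (S * Sᴴ) * aᴴ) * (a * (S * Sᴴ) * aᴴ) = 
      (a * S) * ((Sᴴ * aᴴ) * (a * S) * (Sᴴ * aᴴ)) by simp only [mul_assoc], trace_mul_comm]
    simp only [mul_assoc]
  have h2 : (a * (S * Sᴴ * (S * Sᴴ)) * aᴴ).trace = ((Sᴴ * aᴴ) * (a * S) * (Sᴴ * S)).trace := by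
    rw [show a * (S * Sᴴ * (S * Sᴴ)) * aᴴ = (a * S * (Sᴴ * S)) * (Sᴴ * aᴴ) by
      simp only [mul_assoc], trace_mul_comm]
    simp only [mul_assoc]
  have h3 : (S * Sᴴ * (S * Sᴴ)).trace = (Sᴴ * S * (Sᴴ * S)).trace := by
    rw [show S * Sᴴ * (S * Sᴴ) = S * (Sᴴ * S * Sᴴ) by simp only [mul_assoc], trace_mul_comm]
    simp only [mul_assoc]
  rw [h1, h2, h3]
  simp only [conjTranspose_sub, conjTranspose_smul, conjTranspose_mul, conjTranspose_conjTranspose,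
    sub_mul, mul_sub, trace_sub, smul_mul_assoc, mul_smul_comm, trace_smul]
  rw [trace_mul_comm (Sᴴ * S) (Sᴴ * aᴴ * (a * S))]
  simp [Complex.star_def]
  ring

lemma Qf_nonneg {d : ℕ} (a : Matrix (Fin d) (Fin d) ℂ) {θ : Matrix (Fin d) (Fin d) ℂ}
    (hθ : θ.PosSemidef) : 0 ≤ Qf a θ := by
  obtain ⟨S, rfl⟩ := exists_factor hθ
  rw [Qf_eq]
  exact (Complex.le_def.1 (posSemidef_conjTranspose_mul_self _).trace_nonneg).1

lemma of_Qf_eq_zero {d : ℕ} (a : Matrix (Fin d) (Fin d) ℂ) {θ : Matrix (Fin d) (Fin d) ℂ}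
    (hθ : θ.PosSemidef) (h : Qf a θ = 0) : 
    ∃ l : ℝ, 0 ≤ l ∧ ∃ u : Matrix (Fin d) (Fin d) ℂ,
          u ∈ Matrix.unitaryGroup (Fin d) ℂ ∧
          a * θ * aᴴ = (l : ℂ) • (u * θ * uᴴ) := by
  have hp := (Complex.le_def.1 (hθ.mul_mul_conjTranspose_same a).trace_nonneg).1
  obtain ⟨S, rfl⟩ := exists_factor hθ
  rw [Qf_eq] at h
  set p := (a * (S * Sᴴ) * aᴴ).trace.re
  set M := (a * S)ᴴ * (a * S) - (p : ℂ) • (Sᴴ * S) with hM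
  have hM0 : M = 0 := by
    rw [← trace_conjTranspose_mul_self_eq_zero_iff]
    have := Complex.le_def.1 (posSemidef_conjTranspose_mul_self M).trace_nonneg
    exact Complex.ext h this.2.symm
  rw [hM, sub_eq_zero] at hM0
  have hch : (a * (S * Sᴴ) * aᴴ).charpoly = ((p : ℂ) • (S * Sᴴ)).charpoly := by
    rw [show a * (S * Sᴴ) * aᴴ = (a * S) * (a * S)ᴴ by simp [mul_assoc], charpoly_mul_comm, hM0,
      ← smul_mul_assoc, charpoly_mul_comm, mul_smul_comm]
  have hh : ((p : ℂ) • (S * Sᴴ)).IsHermitian := by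
    simp [IsHermitian, conjTranspose_smul]
  obtain ⟨u, hu, hu2⟩ := unitary_equiv_of_charpoly 
    (hθ.mul_mul_conjTranspose_same a).1 hh hch
  refine ⟨p, hp, u, hu, ?_⟩
  rw [hu2, mul_smul_comm, smul_mul_assoc]

lemma sum_trace {d k : ℕ} (a : Fin k → Matrix (Fin d) (Fin d) ℂ)
    (ha : ∑ i, (a i)ᴴ * a i = 1) (T : Matrix (Fin d) (Fin d) ℂ) :
    ∑ i, (a i * T * (a i)ᴴ).trace.re = T.trace.re := by
  have : ∀ i, (a i * T * (a i)ᴴ).trace = ((a i)ᴴ * a i * T).trace := fun i => trace_mul_cycle _ _ _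
  simp only [this]
  rw [← Complex.re_sum, ← trace_sum, ← Finset.sum_mul, ha, one_mul]

lemma step1 {d k : ℕ} (a : Fin k → Matrix (Fin d) (Fin d) ℂ)
    (ha : ∑ i, (a i)ᴴ * a i = 1) {θ : Matrix (Fin d) (Fin d) ℂ}
    (hθ : θ.PosSemidef) (h1 : θ.trace = 1) :
    ∑ i, Qf (a i) θ ≤ ∑ i, sf (a i * θ * (a i)ᴴ) - (θ * θ).trace.re := by
  have hp := fun i => (Complex.le_def.1 (hθ.mul_mul_conjTranspose_same (a i)).trace_nonneg).1
  have hs1 := sum_trace a ha θ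
  have hs2 := sum_trace a ha (θ * θ)
  rw [h1] at hs1
  have key : ∀ i, Qf (a i) θ ≤ sf (a i * θ * (a i)ᴴ) - 2 * (a i * (θ * θ) * (a i)ᴴ).trace.re
      + (a i * θ * (a i)ᴴ).trace.re * (θ * θ).trace.re := by
    intro i
    have hQ := Qf_nonneg (a i) hθ
    have hpi := hp i
    rcases hpi.eq_or_lt with h0 | h0
    · have hz : a i * θ * (a i)ᴴ = 0 := by
        rw [← (hθ.mul_mul_conjTranspose_same (a i)).trace_eq_zero_iff]
        exact Complex.ext h0.symm 
          (Complex.le_def.1 (hθ.mul_mul_conjTranspose_same (a i)).trace_nonneg).2.symm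
      have hz2 : a i * (θ * θ) * (a i)ᴴ = 0 := by
        obtain ⟨S, rfl⟩ := exists_factor hθ
        have : (a i * S) * (a i * S)ᴴ = 0 := by rw [← hz]; simp [mul_assoc]
        rw [self_mul_conjTranspose_eq_zero] at this
        rw [show a i * (S * Sᴴ * (S * Sᴴ)) * (a i)ᴴ = (a i * S) * (Sᴴ * (S * Sᴴ) * (a i)ᴴ) by
          simp only [mul_assoc], this, zero_mul]
      simp [Qf, sf, hz, hz2]
    · have hp1 : (a i * θ * (a i)ᴴ).trace.re ≤ 1 := by
        have := Finset.single_le_sum (f := fun i => (a i * θ * (a i)ᴴ).trace.re)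
          (fun i _ => hp i) (Finset.mem_univ i)
        simpa [hs1] using this
      have he : Qf (a i) θ = (a i * θ * (a i)ᴴ).trace.re * 
          (sf (a i * θ * (a i)ᴴ) - 2 * (a i * (θ * θ) * (a i)ᴴ).trace.re
      + (a i * θ * (a i)ᴴ).trace.re * (θ * θ).trace.re) := by
        simp only [Qf, sf]
        have := h0.ne'
        simp only [Complex.zero_re] at this
        field_simp
      rw [he] at hQ ⊢
      have := nonneg_of_mul_nonneg_right hQ h0
      exact mul_le_of_le_one_left this hp1
  refine (Finset.sum_le_sum fun i _ => key i).trans ?_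
  rw [Finset.sum_add_distrib, Finset.sum_sub_distrib, ← Finset.mul_sum, ← Finset.sum_mul, hs1, hs2]
  simp
  linarith

lemma sf_smul {d : ℕ} (c : ℝ) (T : Matrix (Fin d) (Fin d) ℂ) : sf ((c : ℂ) • T) = c * sf T := by
  unfold sf
  rcases eq_or_ne c 0 with rfl | hc
  · simp
  simp [trace_smul, smul_mul_assoc, mul_smul_comm]
  field_simp

lemma step2 {d k : ℕ} (a : Fin k → Matrix (Fin d) (Fin d) ℂ)
    (ha : ∑ i, (a i)ᴴ * a i = 1) {T : Matrix (Fin d) (Fin d) ℂ}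
    (hT : T.PosSemidef) (σ : Matrix (Fin d) (Fin d) ℂ) :
    T.trace.re * ∑ i, Qf (a i) (if T.trace ≠ 0 then (T.trace)⁻¹ • T else σ) ≤ 
      ∑ i, sf (a i * T * (a i)ᴴ) - sf T := by
  split_ifs with h
  · have hn := Complex.le_def.1 hT.trace_nonneg
    set t := T.trace.re with ht
    have htr : T.trace = (t : ℂ) := Complex.ext rfl (by simpa using hn.2.symm)
    have ht0 : t ≠ 0 := by rintro h0; apply h; rw [htr, h0]; simp
    have htc : (t : ℂ) ≠ 0 := by exact_mod_cast ht0
    have ht1 : 0 < t := lt_of_le_of_ne hn.1 (Ne.symm ht0)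
    rw [htr]
    set θ := (t : ℂ)⁻¹ • T with hθ
    have hTθ : T = (t : ℂ) • θ := by rw [hθ, smul_smul, mul_inv_cancel₀ htc, one_smul]
    have h1 : θ.trace = 1 := by rw [hθ, trace_smul, htr]; simp [htc]
    have hps : θ.PosSemidef := hT.smul (by rw [← Complex.ofReal_inv]; exact_mod_cast (inv_pos.2 ht1).le)
    have := mul_le_mul_of_nonneg_left (step1 a ha hps h1) ht1.le
    refine this.trans (le_of_eq ?_)
    conv_rhs => rw [hTθ]
    simp only [mul_smul_comm, smul_mul_assoc, sf_smul]
    rw [mul_sub, Finset.mul_sum]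
    simp [sf, h1]
  · push Not at h
    have : T = 0 := hT.trace_eq_zero_iff.1 h
    subst this
    simp [sf]

lemma sf_le {d : ℕ} {T : Matrix (Fin d) (Fin d) ℂ} (hT : T.PosSemidef) : sf T ≤ T.trace.re := by
  have h := trace_sq_re_le hT
  have h0 := (Complex.le_def.1 hT.trace_nonneg).1
  unfold sf
  rw [Complex.zero_re] at h0
  exact div_le_of_le_mul₀ h0 h0 (by linarith [sq (T.trace.re)])

lemma sf_nonneg {d : ℕ} {T : Matrix (Fin d) (Fin d) ℂ} (hT : T.PosSemidef) : 0 ≤ sf T := by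
  have h0 := (Complex.le_def.1 hT.trace_nonneg).1
  refine div_nonneg ?_ h0
  have := (Complex.le_def.1 (posSemidef_conjTranspose_mul_self T).trace_nonneg).1
  rwa [hT.1.eq] at this

noncomputable def Tw {d k : ℕ} (a : Fin k → Matrix (Fin d) (Fin d) ℂ)
    (θ₀ : Matrix (Fin d) (Fin d) ℂ) {n : ℕ} (w : Fin n → Fin k) : Matrix (Fin d) (Fin d) ℂ :=
  wordMatrix a (List.ofFn w) * θ₀ * (wordMatrix a (List.ofFn w))ᴴ

noncomputable def trajW {d k : ℕ} (a : Fin k → Matrix (Fin d) (Fin d) ℂ)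
    (θ₀ σ : Matrix (Fin d) (Fin d) ℂ) {n : ℕ} (w : Fin n → Fin k) : Matrix (Fin d) (Fin d) ℂ :=
  if (Tw a θ₀ w).trace ≠ 0 then ((Tw a θ₀ w).trace)⁻¹ • Tw a θ₀ w else σ

lemma traj_eq {d k : ℕ} (a : Fin k → Matrix (Fin d) (Fin d) ℂ)
    (θ₀ σ : Matrix (Fin d) (Fin d) ℂ) (n : ℕ) (ω : ℕ → Fin k) :
    traj a θ₀ σ n ω = trajW a θ₀ σ (fun j : Fin n => ω j) := rfl

lemma Tw_snoc {d k : ℕ} (a : Fin k → Matrix (Fin d) (Fin d) ℂ)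
    (θ₀ : Matrix (Fin d) (Fin d) ℂ) {n : ℕ} (w : Fin n → Fin k) (i : Fin k) :
    Tw a θ₀ (Fin.snoc (α := fun _ => Fin k) w i) = a i * Tw a θ₀ w * (a i)ᴴ := by
  unfold Tw
  have : wordMatrix a (List.ofFn (Fin.snoc (α := fun _ => Fin k) w i)) = 
      a i * wordMatrix a (List.ofFn w) := by
    rw [List.ofFn_succ']
    simp [wordMatrix]
  rw [this]
  simp only [conjTranspose_mul, mul_assoc]

lemma Tw_posSemidef {d k : ℕ} (a : Fin k → Matrix (Fin d) (Fin d) ℂ)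
    {θ₀ : Matrix (Fin d) (Fin d) ℂ} (h : θ₀.PosSemidef) {n : ℕ} (w : Fin n → Fin k) :
    (Tw a θ₀ w).PosSemidef := h.mul_mul_conjTranspose_same _

lemma trajW_density {d k : ℕ} (a : Fin k → Matrix (Fin d) (Fin d) ℂ)
    {θ₀ σ : Matrix (Fin d) (Fin d) ℂ} (h : θ₀.PosSemidef) (hσ : σ.PosSemidef ∧ σ.trace = 1)
    {n : ℕ} (w : Fin n → Fin k) :
    (trajW a θ₀ σ w).PosSemidef ∧ (trajW a θ₀ σ w).trace = 1 := by
  unfold trajW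
  split_ifs with h0
  · have hT := Tw_posSemidef a h w
    refine ⟨hT.smul ?_, by rw [trace_smul, smul_eq_mul, inv_mul_cancel₀ h0]⟩
    exact inv_nonneg.2 hT.trace_nonneg
  · exact hσ

lemma sum_words {k n : ℕ} (f : (Fin (n + 1) → Fin k) → ℝ) :
    ∑ w, f w = ∑ w : Fin n → Fin k, ∑ i, f (Fin.snoc (α := fun _ => Fin k) w i) := by
  rw [← (Fin.snocEquiv (fun _ : Fin (n + 1) => Fin k)).sum_comp, Fintype.sum_prod_type_right]
  rfl

lemma sum_Tw {d k : ℕ} (a : Fin k → Matrix (Fin d) (Fin d) ℂ) (ha : ∑ i, (a i)ᴴ * a i = 1)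
    (θ₀ : Matrix (Fin d) (Fin d) ℂ) (n : ℕ) :
    ∑ w : Fin n → Fin k, (Tw a θ₀ w).trace.re = θ₀.trace.re := by
  induction n with
  | zero => simp [Tw, wordMatrix]
  | succ n ih =>
    rw [sum_words, ← ih]
    refine Finset.sum_congr rfl fun w _ => ?_
    simp only [Tw_snoc]
    exact sum_trace a ha _

lemma telescoped {d k : ℕ} (a : Fin k → Matrix (Fin d) (Fin d) ℂ) (ha : ∑ i, (a i)ᴴ * a i = 1)
    {θ₀ : Matrix (Fin d) (Fin d) ℂ} (h : θ₀.PosSemidef ∧ θ₀.trace = 1)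
    (σ : Matrix (Fin d) (Fin d) ℂ) (N : ℕ) :
    ∑ n ∈ Finset.range N, ∑ w : Fin n → Fin k,
      (Tw a θ₀ w).trace.re * ∑ i, Qf (a i) (trajW a θ₀ σ w) ≤ 1 := by
  have h1 : ∀ n, ∑ w : Fin n → Fin k,
      (Tw a θ₀ w).trace.re * ∑ i, Qf (a i) (trajW a θ₀ σ w) ≤
      ∑ w : Fin (n + 1) → Fin k, sf (Tw a θ₀ w) - ∑ w : Fin n → Fin k, sf (Tw a θ₀ w) := by
    intro n
    rw [sum_words, ← Finset.sum_sub_distrib]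
    refine Finset.sum_le_sum fun w _ => ?_
    simp only [Tw_snoc]
    exact step2 a ha (Tw_posSemidef a h.1 w) σ
  refine (Finset.sum_le_sum fun n _ => h1 n).trans ?_
  rw [Finset.sum_range_sub (fun n => ∑ w : Fin n → Fin k, sf (Tw a θ₀ w))]
  have h2 : ∑ w : Fin N → Fin k, sf (Tw a θ₀ w) ≤ 1 := by
    refine (Finset.sum_le_sum fun w _ => sf_le (Tw_posSemidef a h.1 w)).trans ?_
    rw [sum_Tw a ha, h.2]; simp
  have h3 : 0 ≤ ∑ w : Fin 0 → Fin k, sf (Tw a θ₀ w) := 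
    Finset.sum_nonneg fun w _ => sf_nonneg (Tw_posSemidef a h.1 w)
  linarith

lemma ae_Q_tendsto {d k : ℕ} (a : Fin k → Matrix (Fin d) (Fin d) ℂ) (ha : ∑ i, (a i)ᴴ * a i = 1)
    {θ₀ : Matrix (Fin d) (Fin d) ℂ} (h : θ₀.PosSemidef ∧ θ₀.trace = 1)
    (σ : Matrix (Fin d) (Fin d) ℂ) (hσ : σ.PosSemidef ∧ σ.trace = 1)
    (P : Measure (ℕ → Fin k)) (hP : CylinderCondition a θ₀ P) :
    ∀ᵐ ω ∂P, Tendsto (fun n => ∑ i, Qf (a i) (traj a θ₀ σ n ω)) atTop (nhds 0) := by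
  have hQ0 : ∀ n (w : Fin n → Fin k), 0 ≤ ∑ i, Qf (a i) (trajW a θ₀ σ w) := fun n w =>
    Finset.sum_nonneg fun i _ => Qf_nonneg (a i) (trajW_density a h.1 hσ w).1
  have hT0 : ∀ n (w : Fin n → Fin k), 0 ≤ (Tw a θ₀ w).trace.re := fun n w =>
    (Complex.le_def.1 (Tw_posSemidef a h.1 w).trace_nonneg).1
  have hr : ∀ n, Measurable (fun (ω : ℕ → Fin k) (j : Fin n) => ω (j : ℕ)) := fun n => by fun_prop
  have hm : ∀ n, Measurable fun ω => ENNReal.ofReal (∑ i, Qf (a i) (traj a θ₀ σ n ω)) := fun n =>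
    (measurable_of_finite (fun w : Fin n → Fin k => 
      ENNReal.ofReal (∑ i, Qf (a i) (trajW a θ₀ σ w)))).comp (hr n)
  have hlint : ∀ n, ∫⁻ ω, ENNReal.ofReal (∑ i, Qf (a i) (traj a θ₀ σ n ω)) ∂P = 
      ENNReal.ofReal (∑ w : Fin n → Fin k,
        (Tw a θ₀ w).trace.re * ∑ i, Qf (a i) (trajW a θ₀ σ w)) := by
    intro n
    have := lintegral_map (μ := P) (measurable_of_finite (fun w : Fin n → Fin k => 
      ENNReal.ofReal (∑ i, Qf (a i) (trajW a θ₀ σ w)))) (hr n)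
    simp only [traj_eq]
    rw [← this, lintegral_fintype, ENNReal.ofReal_sum_of_nonneg 
      (fun w _ => mul_nonneg (hT0 n w) (hQ0 n w))]
    refine Finset.sum_congr rfl fun w _ => ?_
    rw [ENNReal.ofReal_mul (hT0 n w), mul_comm, Measure.map_apply (hr n) (measurableSet_singleton w)]
    congr 1
    rw [Tw, ← hP n w]
    congr 1
    ext ω
    simp [funext_iff]
  have hfin : ∫⁻ ω, ∑' n, ENNReal.ofReal (∑ i, Qf (a i) (traj a θ₀ σ n ω)) ∂P ≠ ⊤ := by
    rw [lintegral_tsum fun n => (hm n).aemeasurable]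
    simp only [hlint]
    refine ne_top_of_le_ne_top ENNReal.one_ne_top ?_
    rw [ENNReal.tsum_eq_iSup_nat]
    refine iSup_le fun N => ?_
    rw [← ENNReal.ofReal_sum_of_nonneg 
      (fun n _ => Finset.sum_nonneg fun w _ => mul_nonneg (hT0 n w) (hQ0 n w))]
    rw [← ENNReal.ofReal_one]
    exact ENNReal.ofReal_le_ofReal (telescoped a ha h σ N)
  filter_upwards [ae_lt_top (Measurable.tsum hm) hfin] with ω hω
  have ht := ENNReal.tendsto_atTop_zero_of_tsum_ne_top hω.ne
  have := (ENNReal.tendsto_toReal ENNReal.zero_ne_top).comp ht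
  simp only [ENNReal.toReal_zero] at this
  refine this.congr fun n => ?_
  exact ENNReal.toReal_ofReal (hQ0 n _)

lemma continuous_Qf {d : ℕ} (a : Matrix (Fin d) (Fin d) ℂ) : Continuous (Qf a) := by
  have hre : ∀ f : Matrix (Fin d) (Fin d) ℂ → Matrix (Fin d) (Fin d) ℂ, Continuous f →
      Continuous fun θ => (f θ).trace.re := fun f hf =>
    Complex.continuous_re.comp hf.matrix_trace
  have h1 : Continuous fun θ : Matrix (Fin d) (Fin d) ℂ => a * θ * aᴴ :=
    (continuous_const.matrix_mul continuous_id).matrix_mul continuous_const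
  have h2 : Continuous fun θ : Matrix (Fin d) (Fin d) ℂ => θ * θ :=
    continuous_id.matrix_mul continuous_id
  have h3 : Continuous fun θ : Matrix (Fin d) (Fin d) ℂ => a * (θ * θ) * aᴴ :=
    (continuous_const.matrix_mul h2).matrix_mul continuous_const
  exact ((hre _ (h1.matrix_mul h1)).sub ((continuous_const.mul (hre _ h1)).mul (hre _ h3))).add
    (((hre _ h1).pow 2).mul (hre _ h2))

/-- Either the quantum trajectory purifies with probability 1, or there exists a mixed
state `ρ` such that each `a_i ρ a_i*` is a nonnegative multiple of a unitary conjugate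
of `ρ`. -/
theorem purification_or_invariant_mixed_state {d k : ℕ}
    (a : Fin k → Matrix (Fin d) (Fin d) ℂ)
    (ha : ∑ i, (a i)ᴴ * a i = 1)
    (θ₀ : Matrix (Fin d) (Fin d) ℂ)
    (hθ₀ : θ₀.PosSemidef ∧ θ₀.trace = 1)
    (σ : Matrix (Fin d) (Fin d) ℂ)
    (hσ : σ.PosSemidef ∧ σ.trace = 1)
    (P : Measure (ℕ → Fin k)) [IsProbabilityMeasure P]
    (hP : CylinderCondition a θ₀ P) :
    (∀ᵐ ω ∂P, ∀ m : ℕ, 1 ≤ m →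
        Tendsto (fun n : ℕ => ((traj a θ₀ σ n ω) ^ m).trace) atTop (nhds 1)) ∨
    (∃ ρ : Matrix (Fin d) (Fin d) ℂ, ρ.PosSemidef ∧ ρ.trace = 1 ∧
        (ρ * ρ).trace.re < 1 ∧
        ∀ i : Fin k, ∃ l : ℝ, 0 ≤ l ∧ ∃ u : Matrix (Fin d) (Fin d) ℂ,
          u ∈ Matrix.unitaryGroup (Fin d) ℂ ∧
          a i * ρ * (a i)ᴴ = (l : ℂ) • (u * ρ * uᴴ)) := by
  by_cases hii : ∃ ρ : Matrix (Fin d) (Fin d) ℂ, ρ.PosSemidef ∧ ρ.trace = 1 ∧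
        (ρ * ρ).trace.re < 1 ∧
        ∀ i : Fin k, ∃ l : ℝ, 0 ≤ l ∧ ∃ u : Matrix (Fin d) (Fin d) ℂ,
          u ∈ Matrix.unitaryGroup (Fin d) ℂ ∧
          a i * ρ * (a i)ᴴ = (l : ℂ) • (u * ρ * uᴴ)
  · exact Or.inr hii
  left
  filter_upwards [ae_Q_tendsto a ha hθ₀ σ hσ P hP] with ω hω m hm
  refine tendsto_of_subseq_tendsto fun ns hns => ?_
  have : FirstCountableTopology (Matrix (Fin d) (Fin d) ℂ) :=
    inferInstanceAs (FirstCountableTopology (Fin d → Fin d → ℂ))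
  obtain ⟨ρ, hρ, φ, hφ, hlim⟩ := isCompact_density.tendsto_subseq
    (x := fun n => traj a θ₀ σ (ns n) ω) (fun n => trajW_density a hθ₀.1 hσ _)
  have hQ : ∑ i, Qf (a i) ρ = 0 := by
    have hc : Continuous fun θ => ∑ i, Qf (a i) θ :=
      continuous_finsetSum _ fun i _ => continuous_Qf (a i)
    exact tendsto_nhds_unique ((hc.tendsto ρ).comp hlim)
      (hω.comp (hns.comp hφ.tendsto_atTop))
  rw [Finset.sum_eq_zero_iff_of_nonneg (fun i _ => Qf_nonneg (a i) hρ.1)] at hQ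
  have h1 : 1 ≤ (ρ * ρ).trace.re := by
    by_contra! hlt
    exact hii ⟨ρ, hρ.1, hρ.2, hlt, fun i => of_Qf_eq_zero (a i) hρ.1 (hQ i (Finset.mem_univ i))⟩
  have hid : IsIdempotentElem ρ := idem_of_trace_sq hρ.1 hρ.2 h1
  have hpow : ρ ^ m = ρ := hid.pow_eq (by omega)
  refine ⟨φ, ?_⟩
  have hc : Continuous fun θ : Matrix (Fin d) (Fin d) ℂ => (θ ^ m).trace := by fun_prop
  have := (hc.tendsto ρ).comp hlim
  rw [hpow, hρ.2] at this
  exact this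
end

section
/- Let (a_1,…,a_k) be a perfect measurement on the complex d×d matrices and let p be a nonzero dark projection, with constants λ_w ≥ 0 satisfying p A_w* A_w p = λ_w p for every finite word w; write λ_i := λ_{(i)} for the one-letter words. Fix i ∈ {1,…,k} with λ_i > 0, and set q := λ_i^{-1} a_i p a_i*. Then q is an orthogonal projection with rank q = rank p, and q is again a dark projection with constants λ'_w = λ_{i::w}/λ_i; that is, for every finite word w = (i_1,…,i_m), q A_w* A_w q = (λ_{(i,i_1,…,i_m)}/λ_i) q. -/
open Matrix

/-- If `p` is a nonzero dark projection with constants `λ_w`, and `λ_i > 0`, then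
`q := λ_i⁻¹ a_i p a_i*` is again a dark projection of the same rank, with constants
`λ_{i::w}/λ_i`. -/
theorem dark_projection_step {d k : ℕ}
    (a : Fin k → Matrix (Fin d) (Fin d) ℂ)
    (ha : ∑ i, (a i)ᴴ * a i = 1)
    (p : Matrix (Fin d) (Fin d) ℂ)
    (hp : p.IsHermitian ∧ p * p = p) (hp0 : p ≠ 0)
    (l : List (Fin k) → ℝ)
    (hl : ∀ w : List (Fin k), 0 ≤ l w ∧
      p * (wordMatrix a w)ᴴ * wordMatrix a w * p = (l w : ℂ) • p)
    (i : Fin k) (hi : 0 < l [i]) :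
    ((l [i] : ℂ)⁻¹ • (a i * p * (a i)ᴴ)).IsHermitian ∧
    ((l [i] : ℂ)⁻¹ • (a i * p * (a i)ᴴ)) * ((l [i] : ℂ)⁻¹ • (a i * p * (a i)ᴴ)) =
      (l [i] : ℂ)⁻¹ • (a i * p * (a i)ᴴ) ∧
    ((l [i] : ℂ)⁻¹ • (a i * p * (a i)ᴴ)).rank = p.rank ∧
    ∀ w : List (Fin k),
      ((l [i] : ℂ)⁻¹ • (a i * p * (a i)ᴴ)) * (wordMatrix a w)ᴴ * wordMatrix a w *
          ((l [i] : ℂ)⁻¹ • (a i * p * (a i)ᴴ)) =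
        ((l (i :: w) / l [i] : ℝ) : ℂ) • ((l [i] : ℂ)⁻¹ • (a i * p * (a i)ᴴ)) := by
  obtain ⟨hh, hpp⟩ := hp
  have hc : (l [i] : ℂ) ≠ 0 := by exact_mod_cast hi.ne'
  have hW : ∀ w : List (Fin k), wordMatrix a (i :: w) = wordMatrix a w * a i := by
    intro w
    simp [wordMatrix]
  have hB : p * ((a i)ᴴ * (a i * p)) = (l [i] : ℂ) • p := by
    have h := (hl [i]).2
    simpa [wordMatrix, Matrix.mul_assoc] using h
  have hw : ∀ w : List (Fin k),
      p * ((a i)ᴴ * ((wordMatrix a w)ᴴ * (wordMatrix a w * (a i * p)))) = (l (i :: w) : ℂ) • p := by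
    intro w
    have h := (hl (i :: w)).2
    rw [hW, Matrix.conjTranspose_mul] at h
    simpa only [Matrix.mul_assoc] using h
  generalize a i = B at *
  generalize hcc : (l [i] : ℂ) = c at *
  refine ⟨?_, ?_, ?_, ?_⟩
  · have hcs : star c = c := by rw [← hcc]; simp
    have h1 : (B * p * Bᴴ)ᴴ = B * p * Bᴴ := by
      simp [Matrix.conjTranspose_mul, hh.eq, Matrix.mul_assoc]
    rw [Matrix.IsHermitian, Matrix.conjTranspose_smul, h1, star_inv₀, hcs]
  · have h1 : (B * p * Bᴴ) * (B * p * Bᴴ) = c • (B * p * Bᴴ) := by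
      calc (B * p * Bᴴ) * (B * p * Bᴴ) = B * (p * (Bᴴ * (B * p))) * Bᴴ := by
            simp only [Matrix.mul_assoc]
        _ = _ := by rw [hB]; simp
    rw [Matrix.smul_mul, Matrix.mul_smul, h1, smul_smul c⁻¹ c, inv_mul_cancel₀ hc, one_smul]
  · apply le_antisymm
    · have h1 : c⁻¹ • (B * p * Bᴴ) = (c⁻¹ • B) * p * Bᴴ := by simp
      rw [h1]
      exact (Matrix.rank_mul_le_left _ _).trans (Matrix.rank_mul_le_right _ _)
    · have h1 : p = (c⁻¹ • (p * Bᴴ)) * (c⁻¹ • (B * p * Bᴴ)) * (B * p) := by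
        have h2 : (p * Bᴴ) * (B * p * Bᴴ) * (B * p) = c • c • p := by
          calc (p * Bᴴ) * (B * p * Bᴴ) * (B * p)
              = (p * (Bᴴ * (B * p))) * (Bᴴ * (B * p)) := by simp only [Matrix.mul_assoc]
            _ = _ := by rw [hB, Matrix.smul_mul, hB]
        rw [Matrix.smul_mul, Matrix.mul_smul, Matrix.smul_mul, Matrix.smul_mul, h2,
          inv_smul_smul₀ hc, inv_smul_smul₀ hc]
      conv_lhs => rw [h1]
      exact (Matrix.rank_mul_le_left _ _).trans (Matrix.rank_mul_le_right _ _)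
  · intro w
    have h1 : (B * p * Bᴴ) * (wordMatrix a w)ᴴ * wordMatrix a w * (B * p * Bᴴ)
        = (l (i :: w) : ℂ) • (B * p * Bᴴ) := by
      calc _ = B * (p * (Bᴴ * ((wordMatrix a w)ᴴ * (wordMatrix a w * (B * p))))) * Bᴴ := by
            simp only [Matrix.mul_assoc]
        _ = _ := by rw [hw]; simp
    rw [Matrix.smul_mul, Matrix.smul_mul, Matrix.smul_mul, Matrix.mul_smul, h1, Complex.ofReal_div,
      hcc, smul_smul, smul_smul, smul_smul]
    congr 1
    ring
end
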